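/- The set of pairs (x,y) ∈ ℚ × ℚ satisfying y² = (x² + 1)(3x² + 2x − 3)(43x⁶ + 48x⁵ − 81x⁴ − 80x³ + 81x² + 48x − 43) is exactly {(1, 8), (1, −8), (−1, 8), (−1, −8)}. -/

import Mathlib

/-- Elements `a + b t + c t^2` with `t^3 = 2` over a commutative ring. -/
@[ext] structure Cub (R : Type*) where
  a : R
  b : R
  c : R

namespace Cub

section basic
variable {R : Type*} [CommRing R]

instance : Zero (Cub R) := ⟨⟨0, 0, 0⟩⟩
instance : One (Cub R) := ⟨⟨1, 0, 0⟩⟩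
instance : Add (Cub R) := ⟨fun x y => ⟨x.a + y.a, x.b + y.b, x.c + y.c⟩⟩
instance : Neg (Cub R) := ⟨fun x => ⟨-x.a, -x.b, -x.c⟩⟩
instance : Sub (Cub R) := ⟨fun x y => ⟨x.a - y.a, x.b - y.b, x.c - y.c⟩⟩
instance : Mul (Cub R) := ⟨fun x y => ⟨x.a * y.a + 2 * (x.b * y.c + x.c * y.b),
  x.a * y.b + x.b * y.a + 2 * (x.c * y.c), x.a * y.c + x.b * y.b + x.c * y.a⟩⟩
instance : NatCast (Cub R) := ⟨fun n => ⟨n, 0, 0⟩⟩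
instance : IntCast (Cub R) := ⟨fun n => ⟨n, 0, 0⟩⟩

@[simp] theorem zero_a : (0 : Cub R).a = 0 := rfl
@[simp] theorem zero_b : (0 : Cub R).b = 0 := rfl
@[simp] theorem zero_c : (0 : Cub R).c = 0 := rfl
@[simp] theorem one_a : (1 : Cub R).a = 1 := rfl
@[simp] theorem one_b : (1 : Cub R).b = 0 := rfl
@[simp] theorem one_c : (1 : Cub R).c = 0 := rfl
@[simp] theorem add_a (x y : Cub R) : (x + y).a = x.a + y.a := rfl
@[simp] theorem add_b (x y : Cub R) : (x + y).b = x.b + y.b := rfl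
@[simp] theorem add_c (x y : Cub R) : (x + y).c = x.c + y.c := rfl
@[simp] theorem sub_a (x y : Cub R) : (x - y).a = x.a - y.a := rfl
@[simp] theorem sub_b (x y : Cub R) : (x - y).b = x.b - y.b := rfl
@[simp] theorem sub_c (x y : Cub R) : (x - y).c = x.c - y.c := rfl
@[simp] theorem neg_a (x : Cub R) : (-x).a = -x.a := rfl
@[simp] theorem neg_b (x : Cub R) : (-x).b = -x.b := rfl
@[simp] theorem neg_c (x : Cub R) : (-x).c = -x.c := rfl
@[simp] theorem mul_a (x y : Cub R) : (x * y).a = x.a * y.a + 2 * (x.b * y.c + x.c * y.b) := rfl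
@[simp] theorem mul_b (x y : Cub R) : (x * y).b = x.a * y.b + x.b * y.a + 2 * (x.c * y.c) := rfl
@[simp] theorem mul_c (x y : Cub R) : (x * y).c = x.a * y.c + x.b * y.b + x.c * y.a := rfl
@[simp] theorem natCast_a (n : ℕ) : (n : Cub R).a = n := rfl
@[simp] theorem natCast_b (n : ℕ) : (n : Cub R).b = 0 := rfl
@[simp] theorem natCast_c (n : ℕ) : (n : Cub R).c = 0 := rfl
@[simp] theorem intCast_a (n : ℤ) : (n : Cub R).a = n := rfl
@[simp] theorem intCast_b (n : ℤ) : (n : Cub R).b = 0 := rfl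
@[simp] theorem intCast_c (n : ℤ) : (n : Cub R).c = 0 := rfl

instance : CommRing (Cub R) where
  add_assoc x y z := by ext <;> simp <;> ring
  zero_add x := by ext <;> simp
  add_zero x := by ext <;> simp
  add_comm x y := by ext <;> simp <;> ring
  left_distrib x y z := by ext <;> simp <;> ring
  right_distrib x y z := by ext <;> simp <;> ring
  zero_mul x := by ext <;> simp
  mul_zero x := by ext <;> simp
  mul_assoc x y z := by ext <;> simp <;> ring
  one_mul x := by ext <;> simp
  mul_one x := by ext <;> simp
  neg_add_cancel x := by ext <;> simp
  mul_comm x y := by ext <;> simp <;> ring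
  sub_eq_add_neg x y := by ext <;> simp <;> ring
  nsmul := nsmulRec
  zsmul := zsmulRec
  natCast_zero := by ext <;> simp
  natCast_succ n := by ext <;> simp
  intCast_ofNat n := by ext <;> simp
  intCast_negSucc n := by ext <;> simp

@[simp] theorem ofNat_a (n : ℕ) [n.AtLeastTwo] : (ofNat(n) : Cub R).a = ofNat(n) := by
  have : (ofNat(n) : Cub R) = ((n : ℕ) : Cub R) := rfl
  rw [this]; simp only [natCast_a]; rfl
@[simp] theorem ofNat_b (n : ℕ) [n.AtLeastTwo] : (ofNat(n) : Cub R).b = 0 := rfl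
@[simp] theorem ofNat_c (n : ℕ) [n.AtLeastTwo] : (ofNat(n) : Cub R).c = 0 := rfl

/-- The nm form. -/
def nm (x : Cub R) : R := x.a ^ 3 + 2 * x.b ^ 3 + 4 * x.c ^ 3 - 6 * x.a * x.b * x.c

theorem nm_mul (x y : Cub R) : nm (x * y) = nm x * nm y := by
  simp only [nm, mul_a, mul_b, mul_c]; ring

/-- The cofactor of the nm. -/
def adj (x : Cub R) : Cub R := ⟨x.a ^ 2 - 2 * x.b * x.c, 2 * x.c ^ 2 - x.a * x.b, x.b ^ 2 - x.a * x.c⟩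

theorem mul_adj (x : Cub R) : x * adj x = ⟨nm x, 0, 0⟩ := by
  ext <;> simp [adj, nm] <;> ring

/-- Base change. -/
def map {S : Type*} [CommRing S] (f : R →+* S) : Cub R →+* Cub S where
  toFun x := ⟨f x.a, f x.b, f x.c⟩
  map_one' := by ext <;> simp
  map_mul' x y := by ext <;> simp [map_ofNat f 2]
  map_zero' := by ext <;> simp
  map_add' x y := by ext <;> simp

/-- Evaluation at a cube root of two. -/
def evalHom {S : Type*} [CommRing S] (f : R →+* S) (t : S) (ht : t ^ 3 = 2) : Cub R →+* S where
  toFun x := f x.a + f x.b * t + f x.c * t ^ 2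
  map_one' := by simp
  map_mul' x y := by
    simp only [mul_a, mul_b, mul_c, map_add, map_mul, map_ofNat]
    linear_combination (-(f x.b * f y.c + f x.c * f y.b) - f x.c * f y.c * t) * ht
  map_zero' := by simp
  map_add' x y := by simp; ring

end basic

instance {R : Type*} [DecidableEq R] : DecidableEq (Cub R) := fun x y =>
  decidable_of_iff (x.a = y.a ∧ x.b = y.b ∧ x.c = y.c) (by
    constructor
    · rintro ⟨h1, h2, h3⟩; ext <;> assumption
    · rintro rfl; exact ⟨rfl, rfl, rfl⟩)

end Cub

/-- The ring of integers of the pure cubic field of discriminant -108. -/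
abbrev Zt := Cub ℤ

namespace Zt
open Cub

theorem nm_aux : ∀ (n : ℕ) (a b c : ℤ), a.natAbs + b.natAbs + c.natAbs ≤ n →
    a ^ 3 + 2 * b ^ 3 + 4 * c ^ 3 - 6 * a * b * c = 0 → a = 0 ∧ b = 0 ∧ c = 0 := by
  intro n
  induction n with
  | zero => intro a b c h _; omega
  | succ n ih =>
    intro a b c h h0
    have key : ∀ a b c : ℤ, a ^ 3 + 2 * b ^ 3 + 4 * c ^ 3 - 6 * a * b * c = 0 →
        ∃ a', a = 2 * a' ∧ b ^ 3 + 2 * c ^ 3 + 4 * a' ^ 3 - 6 * b * c * a' = 0 := by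
      intro a b c h
      have h2 : (2 : ℤ) ∣ a ^ 3 := ⟨-(b ^ 3 + 2 * c ^ 3 - 3 * a * b * c), by linarith⟩
      obtain ⟨a', rfl⟩ := Int.prime_two.dvd_of_dvd_pow h2
      exact ⟨a', rfl, by linarith⟩
    obtain ⟨a', rfl, h1⟩ := key a b c h0
    obtain ⟨b', rfl, h2⟩ := key _ _ _ h1
    obtain ⟨c', rfl, h3⟩ := key _ _ _ h2
    by_cases hz : a' = 0 ∧ b' = 0 ∧ c' = 0
    · omega
    · exfalso
      have := ih a' b' c' (by omega) h3
      omega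

theorem nm_eq_zero {x : Zt} (h : nm x = 0) : x = 0 := by
  obtain ⟨h1, h2, h3⟩ := nm_aux _ x.a x.b x.c le_rfl h
  ext <;> assumption

theorem nm_ne_zero {x : Zt} (h : x ≠ 0) : nm x ≠ 0 := fun h' => h (nm_eq_zero h')

theorem nm_zero : nm (0 : Zt) = 0 := by simp [nm]

theorem nm_one : nm (1 : Zt) = 1 := by simp [nm]

instance : Nontrivial Zt := ⟨0, 1, fun h => by simpa using congrArg Cub.a h⟩

instance : NoZeroDivisors Zt := ⟨fun {x y} h => by
  have h1 : nm x * nm y = 0 := by rw [← nm_mul, h, nm_zero]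
  rcases mul_eq_zero.1 h1 with h | h
  · exact Or.inl (nm_eq_zero h)
  · exact Or.inr (nm_eq_zero h)⟩

theorem round_aux1 (t b c : ℝ) (ht : 0 ≤ t) (ht' : t ≤ 1/2) (hb : 0 ≤ b) (hb' : b ≤ 1/2)
    (hc : 0 ≤ c) (hc' : c ≤ 1/2) :
    |(-t) ^ 3 + 2 * b ^ 3 + 4 * c ^ 3 - 6 * (-t) * b * c| < 1 ∨
    |(1-t) ^ 3 + 2 * b ^ 3 + 4 * c ^ 3 - 6 * (1-t) * b * c| < 1 := by
  have t3 : t ^ 3 ≤ 1/8 := by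
    calc t ^ 3 ≤ (1/2)^3 := by gcongr
      _ = _ := by norm_num
  have b3 : b ^ 3 ≤ 1/8 := by
    calc b ^ 3 ≤ (1/2)^3 := by gcongr
      _ = _ := by norm_num
  have c3 : c ^ 3 ≤ 1/8 := by
    calc c ^ 3 ≤ (1/2)^3 := by gcongr
      _ = _ := by norm_num
  have hbc : b * c ≤ 1/4 := by nlinarith
  have hbc0 : 0 ≤ b * c := by positivity
  have hb3 : 0 ≤ b ^ 3 := by positivity
  have hc3 : 0 ≤ c ^ 3 := by positivity
  have htbc : 0 ≤ t * (b * c) := by positivity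
  by_contra! hcon
  obtain ⟨h1, h2⟩ := hcon
  have g1 : 1 ≤ (-t) ^ 3 + 2 * b ^ 3 + 4 * c ^ 3 - 6 * (-t) * b * c := by
    rcases le_abs.1 h1 with h | h
    · exact h
    · nlinarith
  have e3 : 0 ≤ (1 - t) ^ 3 := by apply pow_nonneg; linarith
  have g2 : 1 ≤ (1-t) ^ 3 + 2 * b ^ 3 + 4 * c ^ 3 - 6 * (1-t) * b * c := by
    rcases le_abs.1 h2 with h | h
    · exact h
    · nlinarith
  have g3 := mul_le_mul_of_nonneg_left g1 (show 0 ≤ 1 - t by linarith)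
  have g4 := mul_le_mul_of_nonneg_left g2 ht
  have g5 : t * (1 - t) * (1 - 2 * t) + 2 * b ^ 3 + 4 * c ^ 3 ≥ 1 := by linarith
  nlinarith [mul_nonneg ht ht, mul_nonneg ht (show 0 ≤ 1 - 2 * t by linarith), sq_nonneg (t - 1/4)]

theorem round_aux2 (a s c : ℝ) (ha : 0 ≤ a) (ha' : a ≤ 1/2) (hs : 0 ≤ s) (hs' : s ≤ 1/2)
    (hc : 0 ≤ c) (hc' : c ≤ 1/2) :
    |a ^ 3 + 2 * (-s) ^ 3 + 4 * c ^ 3 - 6 * a * (-s) * c| < 1 ∨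
    |(a-1) ^ 3 + 2 * (-s) ^ 3 + 4 * c ^ 3 - 6 * (a-1) * (-s) * c| < 1 := by
  have pw : ∀ t : ℝ, 0 ≤ t → t ≤ 1/2 → 0 ≤ t ^ 3 ∧ t ^ 3 ≤ 1/8 := by
    intro t h0 h
    refine ⟨by positivity, ?_⟩
    calc t ^ 3 ≤ (1/2)^3 := by gcongr
      _ = _ := by norm_num
  obtain ⟨a0, a3⟩ := pw a ha ha'
  obtain ⟨s0, s3⟩ := pw s hs hs'
  obtain ⟨c0, c3⟩ := pw c hc hc'
  have hsc : s * c ≤ 1/4 := by nlinarith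
  have hsc0 : 0 ≤ s * c := by positivity
  have hasc : 0 ≤ a * (s * c) := by positivity
  by_contra! hcon
  obtain ⟨h1, h2⟩ := hcon
  have g1 : 1 ≤ a ^ 3 + 6 * a * (s * c) + 4 * c ^ 3 - 2 * s ^ 3 := by
    rcases le_abs.1 h1 with h | h
    · linarith
    · nlinarith
  set t := 1 - a with ht
  have t3 : 0 ≤ t ^ 3 := by apply pow_nonneg; linarith
  have htsc : 0 ≤ t * (s * c) := mul_nonneg (by linarith) hsc0
  have g2 : 1 ≤ t ^ 3 + 6 * t * (s * c) - 4 * c ^ 3 + 2 * s ^ 3 := by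
    rcases le_abs.1 h2 with h | h
    · exfalso
      have : (a-1)^3 = - t^3 := by rw [ht]; ring
      nlinarith
    · have : (a-1)^3 = - t^3 := by rw [ht]; ring
      nlinarith
  rcases le_total a (3/10) with h | h
  · have : a ^ 3 ≤ (3/10)^3 := by gcongr
    have : a * (s * c) ≤ 3/10 * (1/4) := by gcongr
    linarith
  · have : a ^ 3 + t ^ 3 = 1 - 3 * (a * (1 - a)) := by rw [ht]; ring
    have : a * (s * c) + t * (s * c) = s * c := by rw [ht]; ring
    nlinarith

end Zt

namespace Zt
open Cub

theorem round_aux (a b c : ℝ) (ha : -(1/2) ≤ a) (ha' : a ≤ 1/2) (hb : -(1/2) ≤ b) (hb' : b ≤ 1/2)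
    (hc : 0 ≤ c) (hc' : c ≤ 1/2) :
    ∃ n : ℤ, |nm (⟨a - n, b, c⟩ : Cub ℝ)| < 1 := by
  have pw : ∀ t : ℝ, 0 ≤ t → t ≤ 1/2 → 0 ≤ t ^ 3 ∧ t ^ 3 ≤ 1/8 := by
    intro t h0 h
    refine ⟨by positivity, ?_⟩
    calc t ^ 3 ≤ (1/2)^3 := by gcongr
      _ = _ := by norm_num
  have ml : ∀ x y z : ℝ, 0 ≤ x → x ≤ 1/2 → 0 ≤ y → y ≤ 1/2 → 0 ≤ z → z ≤ 1/2 →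
      0 ≤ x * y * z ∧ x * y * z ≤ 1/2 * (1/2) * z := by
    intro x y z hx hx' hy hy' hz hz'
    refine ⟨by positivity, by gcongr⟩
  simp only [nm]
  rcases le_total 0 b with h1 | h1
  · rcases le_total 0 a with h2 | h2
    · refine ⟨0, ?_⟩
      obtain ⟨a0, a3⟩ := pw a h2 ha'
      obtain ⟨s0, s3⟩ := pw b h1 hb'
      obtain ⟨c0, c3⟩ := pw c hc hc'
      obtain ⟨m0, m1⟩ := ml a b c h2 ha' h1 hb' hc hc'
      rw [abs_lt]; push_cast; simp only [sub_zero]; constructor <;> nlinarith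
    · rcases round_aux1 (-a) b c (by linarith) (by linarith) h1 hb' hc hc' with h | h
      · refine ⟨0, ?_⟩
        convert h using 2; push_cast; ring
      · refine ⟨-1, ?_⟩
        convert h using 2; push_cast; ring
  · rcases le_total 0 a with h2 | h2
    · rcases round_aux2 a (-b) c (by linarith) (by linarith) (by linarith) (by linarith) hc hc' with h | h
      · refine ⟨0, ?_⟩
        convert h using 2; push_cast; ring
      · refine ⟨1, ?_⟩
        convert h using 2; push_cast; ring
    · refine ⟨0, ?_⟩
      obtain ⟨a0, a3⟩ := pw (-a) (by linarith) (by linarith)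
      obtain ⟨s0, s3⟩ := pw (-b) (by linarith) (by linarith)
      obtain ⟨c0, c3⟩ := pw c hc hc'
      obtain ⟨m0, m1⟩ := ml (-a) (-b) c (by linarith) (by linarith) (by linarith) (by linarith) hc hc'
      have e1 : (-a)^3 = -a^3 := by ring
      have e2 : (-b)^3 = -b^3 := by ring
      have hcc : 4 * c ^ 3 - 3/2 * c ≥ -(6/10) := by
        nlinarith [mul_nonneg hc (sq_nonneg (c - 35/100)), sq_nonneg (c - 35/100)]
      rw [abs_lt]; push_cast; simp only [sub_zero]; constructor <;> nlinarith

theorem round_aux' (z : Cub ℝ) :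
    ∃ q : Zt, |nm (z - map (Int.castRingHom ℝ) q)| < 1 := by
  have key : ∀ x : ℝ, -(1/2) ≤ x - round x ∧ x - round x ≤ 1/2 := fun x => abs_le.1 (abs_sub_round x)
  obtain ⟨ha, ha'⟩ := key z.a
  obtain ⟨hb, hb'⟩ := key z.b
  obtain ⟨hc, hc'⟩ := key z.c
  rcases le_total 0 (z.c - round z.c) with h | h
  · obtain ⟨n, hn⟩ := round_aux _ _ _ ha ha' hb hb' h hc'
    refine ⟨⟨round z.a + n, round z.b, round z.c⟩, ?_⟩
    convert hn using 3
    ext <;> simp [map]; ring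
  · obtain ⟨n, hn⟩ := round_aux (-(z.a - round z.a)) (-(z.b - round z.b)) (-(z.c - round z.c))
      (by linarith) (by linarith) (by linarith) (by linarith) (by linarith) (by linarith)
    refine ⟨⟨round z.a - n, round z.b, round z.c⟩, ?_⟩
    rw [← abs_neg]
    convert hn using 2
    simp [nm, map]; ring

theorem nm_map (x : Zt) : nm (map (Int.castRingHom ℝ) x) = ((nm x : ℤ) : ℝ) := by
  simp [nm, map]

theorem exists_quot (x y : Zt) (hy : y ≠ 0) : ∃ q : Zt, (nm (x - y * q)).natAbs < (nm y).natAbs := by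
  have hN : ((nm y : ℤ) : ℝ) ≠ 0 := by exact_mod_cast nm_ne_zero hy
  let φ := map (Int.castRingHom ℝ)
  let w : Cub ℝ := ⟨((nm y : ℤ) : ℝ)⁻¹, 0, 0⟩
  obtain ⟨q, hq⟩ := round_aux' (φ (x * adj y) * w)
  refine ⟨q, ?_⟩
  have hyw : φ y * (φ (adj y) * w) = 1 := by
    rw [← mul_assoc, ← _root_.map_mul, mul_adj]
    ext <;> simp [φ, map, w, hN]
  have h1 : φ (x - y * q) = φ y * (φ (x * adj y) * w - φ q) := by
    rw [map_sub, _root_.map_mul, _root_.map_mul]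
    linear_combination (-φ x) * hyw
  have h2 : |((nm (x - y * q) : ℤ) : ℝ)| < |((nm y : ℤ) : ℝ)| := by
    rw [← nm_map, ← nm_map]
    change |nm (φ _)| < |nm (φ y)|
    rw [h1, nm_mul, abs_mul]
    have : 0 < |nm (φ y)| := by
      rw [nm_map]; exact abs_pos.2 hN
    nlinarith
  have h3 : |nm (x - y * q)| < |nm y| := by exact_mod_cast h2
  rw [Int.abs_eq_natAbs, Int.abs_eq_natAbs] at h3; exact_mod_cast h3

noncomputable instance : EuclideanDomain Zt :=
  { (inferInstance : CommRing Zt), (inferInstance : Nontrivial Zt) with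
    quotient := fun x y => by
      classical exact if h : y = 0 then 0 else Classical.choose (exists_quot x y h)
    quotient_zero := fun x => by simp
    remainder := fun x y => by
      classical exact x - y * (if h : y = 0 then 0 else Classical.choose (exists_quot x y h))
    quotient_mul_add_remainder_eq := fun x y => by simp
    r := fun x y => (nm x).natAbs < (nm y).natAbs
    r_wellFounded := (measure fun x : Zt => (nm x).natAbs).wf
    remainder_lt := fun x y hy => by
      have := Classical.choose_spec (exists_quot x y hy)
      simpa [hy] using this
    mul_left_not_lt := fun x y hy => by
      rw [nm_mul, Int.natAbs_mul, not_lt]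
      have := nm_ne_zero hy
      exact Nat.le_mul_of_pos_right _ (by omega) }

example : UniqueFactorizationMonoid Zt := inferInstance
example : IsPrincipalIdealRing Zt := inferInstance
example : IsDomain Zt := inferInstance
example : (inferInstance : EuclideanDomain Zt).toCommRing = (inferInstance : CommRing Zt) := by with_reducible_and_instances rfl

end Zt

namespace PIDaux

variable {R : Type*} [CommRing R] [IsDomain R] [IsPrincipalIdealRing R]

theorem sq_dvd_sq {x y : R} (h : x ^ 2 ∣ y ^ 2) : x ∣ y :=
  (IsIntegrallyClosed.pow_dvd_pow_iff (by norm_num)).1 h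

theorem sq_of_sq_mul {c F g : R} (hc : c ≠ 0) (h : c ^ 2 * F = g ^ 2) : ∃ k, F = k ^ 2 := by
  obtain ⟨k, rfl⟩ := sq_dvd_sq (Dvd.intro _ h)
  refine ⟨k, ?_⟩
  have : c ^ 2 ≠ 0 := pow_ne_zero _ hc
  apply mul_left_cancel₀ this
  rw [h]; ring

theorem odd_prime {p δ x c y : R} (hp : Prime p) (hd : Squarefree δ) (hpd : p ∣ δ) (hx : x ≠ 0)
    (h : δ * x ^ 2 * c = y ^ 2) : p ∣ c := by
  obtain ⟨w, hw⟩ := sq_of_sq_mul (F := δ * c) hx (g := y) (by rw [← h]; ring)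
  have h1 : p ∣ w := hp.dvd_of_dvd_pow (n := 2) (by rw [← hw]; exact hpd.mul_right _)
  obtain ⟨w, rfl⟩ := h1
  obtain ⟨d, rfl⟩ := hpd
  have h2 : d * c = p * w ^ 2 := by
    apply mul_left_cancel₀ hp.ne_zero; rw [← mul_assoc, hw]; ring
  rcases hp.dvd_or_dvd (Dvd.intro _ h2.symm) with h3 | h3
  · exact absurd (hd p (mul_dvd_mul_left p h3)) hp.not_isUnit
  · exact h3

theorem sqf_decomp (x : R) (hx : x ≠ 0) : ∃ δ m : R, Squarefree δ ∧ x = δ * m ^ 2 := by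
  induction x using UniqueFactorizationMonoid.induction_on_prime with
  | h₁ => exact absurd rfl hx
  | h₂ x hu => exact ⟨x, 1, hu.squarefree, by ring⟩
  | h₃ a p ha hp ih =>
    obtain ⟨δ, m, hd, rfl⟩ := ih ha
    by_cases hpd : p ∣ δ
    · obtain ⟨d, rfl⟩ := hpd
      exact ⟨d, p * m, hd.squarefree_of_dvd (Dvd.intro_left _ rfl), by ring⟩
    · refine ⟨p * δ, m, ?_, by ring⟩
      rw [squarefree_mul_iff]
      exact ⟨(hp.irreducible.coprime_iff_not_dvd.2 hpd).isRelPrime, hp.irreducible.squarefree, hd⟩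

theorem extract (a b : R) (hb : b ≠ 0) : ∃ g a' b', a = g * a' ∧ b = g * b' ∧ IsCoprime a' b' := by
  obtain ⟨g, hg⟩ := (IsPrincipalIdealRing.principal (Ideal.span {a, b})).principal
  have hg' : Ideal.span {a, b} = Ideal.span {g} := hg
  have ha1 : a ∈ Ideal.span {g} := by rw [← hg']; exact Ideal.subset_span (by simp)
  have hb1 : b ∈ Ideal.span {g} := by rw [← hg']; exact Ideal.subset_span (by simp)
  obtain ⟨a', rfl⟩ := Ideal.mem_span_singleton.1 ha1
  obtain ⟨b', rfl⟩ := Ideal.mem_span_singleton.1 hb1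
  have hgm : g ∈ Ideal.span {g * a', g * b'} := by rw [hg']; exact Ideal.mem_span_singleton_self g
  obtain ⟨u, v, huv⟩ := Ideal.mem_span_pair.1 hgm
  refine ⟨g, a', b', rfl, rfl, u, v, ?_⟩
  have hg0 : g ≠ 0 := left_ne_zero_of_mul hb
  apply mul_left_cancel₀ hg0
  linear_combination huv

theorem unit_of_no_prime {δ : R} (h0 : δ ≠ 0) (h : ∀ p, Prime p → ¬ p ∣ δ) : IsUnit δ := by
  by_contra hu
  obtain ⟨p, hp, hpd⟩ := WfDvdMonoid.exists_irreducible_factor hu h0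
  exact h p hp.prime hpd

theorem coprime_prime {a b p : R} (h : IsCoprime a b) (hp : Prime p) (h1 : p ∣ a) (h2 : p ∣ b) : False :=
  hp.not_isUnit (h.isUnit_of_dvd' h1 h2)

/-- peel off a prime from a squarefree element -/
theorem peel {p δ : R} (hd : Squarefree δ) (hp : Prime p) :
    ¬ p ∣ δ ∨ ∃ δ', δ = p * δ' ∧ ¬ p ∣ δ' ∧ Squarefree δ' := by
  by_cases h : p ∣ δ
  · obtain ⟨d, rfl⟩ := h
    refine Or.inr ⟨d, rfl, fun h => ?_, hd.squarefree_of_dvd (Dvd.intro_left _ rfl)⟩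
    exact hp.not_isUnit (hd p (mul_dvd_mul_left p h))
  · exact Or.inl h

/-- The general step of a descent by 2-isogeny. -/
theorem descent {A B a b z : R} (ha : a ≠ 0) (hb : b ≠ 0)
    (h : a * b * (a ^ 2 + A * a * b + B * b ^ 2) = z ^ 2) :
    ∃ δ B' m e N : R, Squarefree δ ∧ δ * B' = B ∧ IsCoprime m e ∧ IsCoprime δ e ∧ m ≠ 0 ∧ e ≠ 0 ∧
      a * e ^ 2 = δ * m ^ 2 * b ∧ N ^ 2 = δ * m ^ 4 + A * m ^ 2 * e ^ 2 + B' * e ^ 4 := by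
  obtain ⟨g, a, b, rfl, rfl, hab⟩ := extract a b hb
  have hg : g ≠ 0 := left_ne_zero_of_mul hb
  have ha' : a ≠ 0 := right_ne_zero_of_mul ha
  have hb' : b ≠ 0 := right_ne_zero_of_mul hb
  obtain ⟨z, hz⟩ := sq_of_sq_mul (c := g ^ 2) (F := a * b * (a ^ 2 + A * a * b + B * b ^ 2)) (g := z)
    (pow_ne_zero _ hg) (by rw [← h]; ring)
  obtain ⟨δ₂, e, hd2, rfl⟩ := sqf_decomp b hb'
  have he0 : e ≠ 0 := by rintro rfl; simp at hb'
  have hu : IsUnit δ₂ := by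
    refine unit_of_no_prime hd2.ne_zero fun p hp hpd => ?_
    have h1 := odd_prime hp hd2 hpd he0
      (c := a * (a ^ 2 + A * a * (δ₂ * e ^ 2) + B * (δ₂ * e ^ 2) ^ 2)) (y := z) (by rw [← hz]; ring)
    have hpb : p ∣ δ₂ * e ^ 2 := hpd.mul_right _
    rcases hp.dvd_or_dvd h1 with h2 | h2
    · exact coprime_prime hab hp h2 hpb
    · have h3 : p ∣ a ^ 2 := by
        have : a ^ 2 = (a ^ 2 + A * a * (δ₂ * e ^ 2) + B * (δ₂ * e ^ 2) ^ 2)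
          - (δ₂ * e ^ 2) * (A * a + B * (δ₂ * e ^ 2)) := by ring
        rw [this]
        exact dvd_sub h2 (hpb.mul_right _)
      exact coprime_prime hab hp (hp.dvd_of_dvd_pow h3) hpb
  obtain ⟨u, rfl⟩ := hu
  obtain ⟨u', huu⟩ : ∃ u' : R, (u : R) * u' = 1 := ⟨_, u.mul_inv⟩
  have hu'0 : u' ≠ 0 := by rintro rfl; simp at huu
  obtain ⟨δ, m, hd, hm⟩ := sqf_decomp (a * u') (mul_ne_zero ha' hu'0)
  have hau : a = u * (δ * m ^ 2) := by rw [← hm]; linear_combination (-a) * huu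
  have hm0 : m ≠ 0 := by rintro rfl; simp at hau; exact ha' hau
  have hae : IsCoprime a e := by
    have := hab.of_mul_right_right
    exact (IsCoprime.pow_right_iff (by norm_num)).1 this
  have hde : IsCoprime δ e := hae.of_isCoprime_of_dvd_left ⟨u * m ^ 2, by rw [hau]; ring⟩
  have hme : IsCoprime m e := hae.of_isCoprime_of_dvd_left ⟨u * δ * m, by rw [hau]; ring⟩
  have hu0 : (u : R) ≠ 0 := u.ne_zero
  obtain ⟨w, hw⟩ := sq_of_sq_mul (c := u ^ 2 * (m * e)) (g := z)
    (F := δ * (δ ^ 2 * m ^ 4 + A * δ * m ^ 2 * e ^ 2 + B * e ^ 4))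
    (mul_ne_zero (pow_ne_zero _ hu0) (mul_ne_zero hm0 he0)) (by
      rw [← hz, hau]; ring)
  have hdw : δ ∣ w := (hd.dvd_pow_iff_dvd (n := 2) (by norm_num)).1 ⟨_, hw.symm⟩
  obtain ⟨N, rfl⟩ := hdw
  have hw2 : δ ^ 2 * m ^ 4 + A * δ * m ^ 2 * e ^ 2 + B * e ^ 4 = δ * N ^ 2 := by
    apply mul_left_cancel₀ hd.ne_zero; rw [hw]; ring
  have hdB : δ ∣ B := by
    have : δ ∣ B * e ^ 4 := ⟨N ^ 2 - δ * m ^ 4 - A * m ^ 2 * e ^ 2, by linear_combination hw2⟩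
    exact (hde.pow_right).dvd_of_dvd_mul_right this
  obtain ⟨B', rfl⟩ := hdB
  refine ⟨δ, B', m, e, N, hd, rfl, hme, hde, hm0, he0, ?_, ?_⟩
  · rw [hau]; ring
  · apply mul_left_cancel₀ hd.ne_zero
    linear_combination -hw2

end PIDaux

namespace Zt
open Cub

/-- The cube root of two. -/
def th : Zt := ⟨0, 1, 0⟩
/-- The fundamental unit. -/
def ep : Zt := ⟨-1, 1, 0⟩
/-- Its inverse. -/
def epi : Zt := ⟨1, 1, 1⟩
/-- The prime above three. -/
def p3 : Zt := ⟨1, 1, 0⟩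
/-- The prime of degree one above five. -/
def p5 : Zt := ⟨-3, 0, 2⟩
/-- The prime of degree two above five. -/
def p25 : Zt := ⟨1, 2, -1⟩
/-- The prime of degree two above seventeen. -/
def p289 : Zt := ⟨-1, 2, -4⟩

/-- The real cube root of two. -/
noncomputable def rt : ℝ := (2 : ℝ) ^ ((1 : ℝ) / 3)

theorem rt_cube : rt ^ 3 = 2 := by
  unfold rt
  rw [← Real.rpow_natCast, ← Real.rpow_mul (by norm_num)]
  norm_num

theorem rt_pos : 0 < rt := by unfold rt; positivity

theorem rt_lo : 1.2599 < rt := by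
  by_contra! h
  have : rt ^ 3 ≤ 1.2599 ^ 3 := pow_le_pow_left₀ rt_pos.le h 3
  rw [rt_cube] at this; norm_num at this

theorem rt_hi : rt < 1.26 := by
  by_contra! h
  have : (1.26 : ℝ) ^ 3 ≤ rt ^ 3 := pow_le_pow_left₀ (by norm_num) h 3
  rw [rt_cube] at this; norm_num at this

theorem rt2_lo : 1.5873 < rt ^ 2 := by nlinarith [rt_lo]
theorem rt2_hi : rt ^ 2 < 1.5876 := by nlinarith [rt_hi, rt_pos]

/-- The real embedding. -/
noncomputable def re : Zt →+* ℝ := evalHom (Int.castRingHom ℝ) rt rt_cube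

theorem re_def (x : Zt) : re x = x.a + x.b * rt + x.c * rt ^ 2 := rfl

/-- The square of the absolute value of the complex embedding, doubled. -/
noncomputable def qf (x : Zt) : ℝ :=
  (x.a - x.b * rt) ^ 2 + (x.b * rt - x.c * rt ^ 2) ^ 2 + (x.a - x.c * rt ^ 2) ^ 2

theorem re_mul_qf (x : Zt) : re x * qf x = 2 * ((nm x : ℤ) : ℝ) := by
  rw [re_def, qf, nm]
  push_cast
  have h := rt_cube
  linear_combination (2 * (x.b : ℝ) ^ 3 + 2 * (x.c : ℝ) ^ 3 * (rt ^ 3 + 2) - 6 * x.a * x.b * x.c) * h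

theorem qf_nonneg (x : Zt) : 0 ≤ qf x := by unfold qf; positivity

theorem nm_pos_of_re_pos {x : Zt} (h : 0 < re x) : 0 < nm x := by
  have h1 := re_mul_qf x
  have h2 := qf_nonneg x
  have hx : x ≠ 0 := by rintro rfl; simp at h
  have h3 := nm_ne_zero hx
  have h4 : (0 : ℝ) ≤ ((nm x : ℤ) : ℝ) := by nlinarith [mul_nonneg h.le h2]
  have h5 : 0 ≤ nm x := by exact_mod_cast h4
  omega

theorem nm_sign {x : Zt} (h : 0 < nm x) : 0 < re x := by
  have h1 := re_mul_qf x
  have h2 := qf_nonneg x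
  have h4 : (0 : ℝ) < ((nm x : ℤ) : ℝ) := by exact_mod_cast h
  by_contra! h5
  nlinarith [mul_nonneg (neg_nonneg.2 h5) h2]

theorem re_ne_zero {x : Zt} (h : x ≠ 0) : re x ≠ 0 := by
  intro h0
  have h1 := re_mul_qf x
  rw [h0, zero_mul] at h1
  have h2 : ((nm x : ℤ) : ℝ) = 0 := by linarith
  exact nm_ne_zero h (by exact_mod_cast h2)

theorem unit_core (x : Zt) (hn : nm x = 1) (h1 : 1 ≤ re x) (h2 : re x < 1 + rt + rt ^ 2) : x = 1 := by
  have hq := re_mul_qf x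
  rw [hn] at hq
  have hq0 := qf_nonneg x
  have hq2 : qf x ≤ 2 := by push_cast at hq; nlinarith
  rw [re_def] at h1 h2
  unfold qf at hq2
  have l1 := rt_lo
  have l2 := rt_hi
  have l3 := rt2_lo
  have l4 := rt2_hi
  obtain ⟨a, b, c⟩ := x
  simp only at *
  set s := rt ^ 2
  have b1 : |(a : ℝ) - b * rt| ≤ 1.415 := by
    apply abs_le_of_sq_le_sq _ (by norm_num)
    nlinarith [sq_nonneg ((b:ℝ) * rt - c * s), sq_nonneg ((a:ℝ) - c * s)]
  have b2 : |(a : ℝ) - c * s| ≤ 1.415 := by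
    apply abs_le_of_sq_le_sq _ (by norm_num)
    nlinarith [sq_nonneg ((b:ℝ) * rt - c * s), sq_nonneg ((a:ℝ) - b * rt)]
  rw [abs_le] at b1 b2
  have a1 : (a : ℝ) < 3 := by linarith
  have a2 : (-1 : ℝ) < a := by linarith
  have a1' : a < 3 := by exact_mod_cast a1
  have a2' : -1 < a := by exact_mod_cast a2
  have c1 : (b : ℝ) < 4 := by
    by_contra! h; nlinarith
  have c2 : (-2 : ℝ) < b := by
    by_contra! h; nlinarith
  have d1 : (c : ℝ) < 3 := by
    by_contra! h; nlinarith
  have d2 : (-2 : ℝ) < c := by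
    by_contra! h; nlinarith
  have c1' : b < 4 := by exact_mod_cast c1
  have c2' : -2 < b := by exact_mod_cast c2
  have d1' : c < 3 := by exact_mod_cast d1
  have d2' : -2 < c := by exact_mod_cast d2
  clear hq hq0 hq2 a1 a2 c1 c2 d1 d2
  interval_cases a <;> interval_cases b <;> interval_cases c <;> norm_num [nm] at hn <;>
    first
    | rfl
    | (exfalso; push_cast at *; linarith)

/-- The fundamental unit as a unit. -/
def epu : Ztˣ := ⟨ep, epi, by decide, by decide⟩

theorem re_ep_inv : re ((epu⁻¹ : Ztˣ) : Zt) = 1 + rt + rt ^ 2 := by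
  change re epi = _
  rw [re_def]; simp [epi]

theorem nm_unit (u : Ztˣ) : nm (u : Zt) = 1 ∨ nm (u : Zt) = -1 := by
  have h : nm (u : Zt) * nm ((u⁻¹ : Ztˣ) : Zt) = 1 := by
    rw [← nm_mul, Units.mul_inv, nm_one]
  exact Int.isUnit_iff.1 (IsUnit.of_mul_eq_one _ h)

theorem unit_pos (u : Ztˣ) (hu : 0 < re (u : Zt)) : ∃ n : ℤ, u = epu ^ n := by
  have hy : 1 < re ((epu⁻¹ : Ztˣ) : Zt) := by
    rw [re_ep_inv]; nlinarith [rt_pos]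
  obtain ⟨n, h1, h2⟩ := exists_mem_Ico_zpow hu hy
  refine ⟨-n, ?_⟩
  have hre : ∀ k : ℤ, re ((epu ^ k : Ztˣ) : Zt) = (re ((epu⁻¹ : Ztˣ) : Zt)) ^ (-k) := by
    intro k
    have h := congrArg Units.val (map_zpow (Units.map (re : Zt →* ℝ)) epu k)
    rw [Units.val_zpow_eq_zpow_val] at h
    have h' : re ((epu ^ k : Ztˣ) : Zt) = (re (epu : Zt)) ^ k := h
    simp only [map_units_inv, zpow_neg, inv_zpow, inv_inv]
    exact h'
  have hyp : 0 < re ((epu⁻¹ : Ztˣ) : Zt) := by linarith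
  have hkey : ((u * epu ^ n : Ztˣ) : Zt) = 1 := by
    have hr : re ((u * epu ^ n : Ztˣ) : Zt) = re u * (re ((epu⁻¹ : Ztˣ) : Zt)) ^ (-n) := by
      rw [Units.val_mul, map_mul, hre]
    have hp : 0 < (re ((epu⁻¹ : Ztˣ) : Zt)) ^ (-n) := zpow_pos hyp _
    apply unit_core
    · rcases nm_unit (u * epu ^ n) with h | h
      · exact h
      · have := nm_pos_of_re_pos (x := ((u * epu ^ n : Ztˣ) : Zt)) (by rw [hr]; positivity)
        omega
    · rw [hr]
      calc (1 : ℝ) = (re ((epu⁻¹ : Ztˣ) : Zt)) ^ n * (re ((epu⁻¹ : Ztˣ) : Zt)) ^ (-n) := by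
            rw [← zpow_add₀ hyp.ne']; simp
        _ ≤ _ := by gcongr
    · rw [hr, ← re_ep_inv]
      calc _ < (re ((epu⁻¹ : Ztˣ) : Zt)) ^ (n + 1) * (re ((epu⁻¹ : Ztˣ) : Zt)) ^ (-n) := by gcongr
        _ = _ := by rw [← zpow_add₀ hyp.ne']; simp
  have h3 : u * epu ^ n = 1 := Units.ext hkey
  rw [zpow_neg]; exact eq_inv_of_mul_eq_one_left h3

/-- Units modulo squares. -/
theorem unit_mod_sq (x : Zt) (hx : IsUnit x) : ∃ s w : Zt, IsUnit w ∧ x = s * w ^ 2 ∧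
    (s = 1 ∨ s = -1 ∨ s = ep ∨ s = -ep) := by
  have pos : ∀ u : Ztˣ, 0 < re (u : Zt) → ∃ s w : Zt, IsUnit w ∧ (u : Zt) = s * w ^ 2 ∧
      (s = 1 ∨ s = ep) := by
    intro u hu
    obtain ⟨n, rfl⟩ := unit_pos u hu
    rcases Int.even_or_odd' n with ⟨k, rfl | rfl⟩
    · refine ⟨1, ((epu ^ k : Ztˣ) : Zt), Units.isUnit _, ?_, Or.inl rfl⟩
      rw [one_mul, ← Units.val_pow_eq_pow_val, ← zpow_natCast, ← zpow_mul, mul_comm]; rfl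
    · refine ⟨ep, ((epu ^ k : Ztˣ) : Zt), Units.isUnit _, ?_, Or.inr rfl⟩
      have : ep = ((epu : Ztˣ) : Zt) := rfl
      rw [this, ← Units.val_pow_eq_pow_val, ← Units.val_mul, ← zpow_natCast, ← zpow_mul,
        zpow_add, zpow_one, mul_comm k, mul_comm]; rfl
  obtain ⟨u, rfl⟩ := hx
  rcases lt_or_gt_of_ne (re_ne_zero u.ne_zero) with h | h
  · obtain ⟨s, w, hw, h1, h2⟩ := pos (-u) (by simpa using h)
    refine ⟨-s, w, hw, ?_, ?_⟩
    · rw [neg_mul, ← h1]; simp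
    · rcases h2 with rfl | rfl <;> simp
  · obtain ⟨s, w, hw, h1, h2⟩ := pos u h
    exact ⟨s, w, hw, h1, by tauto⟩

end Zt

namespace Zt
open Cub

theorem dvd_th (x : Zt) : th ∣ x ↔ 2 ∣ x.a := by
  constructor
  · rintro ⟨y, rfl⟩
    simp [th]
  · rintro ⟨k, hk⟩
    exact ⟨⟨x.b, x.c, k⟩, by ext <;> simp [th, hk]⟩

theorem unit_of_nm {x : Zt} (h : (nm x).natAbs = 1) : IsUnit x := by
  have h1 := mul_adj x
  rcases Int.natAbs_eq (nm x) with h2 | h2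
  · rw [h] at h2; rw [h2] at h1
    exact IsUnit.of_mul_eq_one _ (h1.trans (by ext <;> simp))
  · rw [h] at h2; rw [h2] at h1
    refine IsUnit.of_mul_eq_one (-adj x) ?_
    rw [mul_neg, h1]; ext <;> simp

theorem prime_of_nm {x : Zt} (h : (nm x).natAbs.Prime) : Prime x := by
  apply Irreducible.prime
  constructor
  · intro hu
    obtain ⟨u, rfl⟩ := hu
    rcases nm_unit u with h1 | h1 <;> rw [h1] at h <;> norm_num at h
  · rintro y z rfl
    rw [nm_mul, Int.natAbs_mul] at h
    rcases Nat.prime_mul_iff.1 h with ⟨_, h1⟩ | ⟨_, h1⟩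
    · exact Or.inr (unit_of_nm h1)
    · exact Or.inl (unit_of_nm h1)

theorem prime_th : Prime th := prime_of_nm (by norm_num [nm, th])
theorem prime_p3 : Prime p3 := prime_of_nm (by norm_num [nm, p3])
theorem prime_p5 : Prime p5 := prime_of_nm (by norm_num [nm, p5])

theorem dvd_p3 (x : Zt) : p3 ∣ x ↔ 3 ∣ x.a - x.b + x.c := by
  constructor
  · rintro ⟨y, rfl⟩
    simp [p3]; ring_nf; omega
  · rintro ⟨k, hk⟩
    refine ⟨⟨x.a - 2 * k, x.c - k, k⟩, ?_⟩
    ext <;> simp [p3] <;> linarith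

theorem dvd_p25 (x : Zt) : p25 ∣ x ↔ 5 ∣ x.a + x.c ∧ 5 ∣ x.b + 2 * x.c := by
  constructor
  · rintro ⟨y, rfl⟩
    simp [p25]; ring_nf; omega
  · rintro ⟨⟨k, hk⟩, ⟨l, hl⟩⟩
    refine ⟨⟨-x.c, 0, 0⟩ + ⟨k, l, 0⟩ * ⟨1, 0, 1⟩, ?_⟩
    ext <;> simp [p25] <;> linarith

theorem dvd_p289 (x : Zt) : p289 ∣ x ↔ 17 ∣ x.a - 13 * x.c ∧ 17 ∣ x.b - 8 * x.c := by
  constructor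
  · rintro ⟨y, rfl⟩
    simp [p289]; ring_nf; omega
  · rintro ⟨⟨k, hk⟩, ⟨l, hl⟩⟩
    refine ⟨⟨x.c, 0, 0⟩ * ⟨-1, -2, -1⟩ + ⟨k, l, 0⟩ * ⟨-1, -2, 0⟩, ?_⟩
    ext <;> simp [p289] <;> linarith

theorem prime_p25 : Prime p25 := by
  refine ⟨by decide, fun h => ?_, fun x y h => ?_⟩
  · have h1 := (dvd_p25 1).1 h.dvd
    simp at h1
  · rw [dvd_p25] at h ⊢
    rw [dvd_p25]
    have key : ∀ u v u' v' : ZMod 5, u * u' + v * v' = 0 → u * v' + v * u' + 2 * (v * v') = 0 →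
      (u = 0 ∧ v = 0) ∨ (u' = 0 ∧ v' = 0) := by decide
    have cst : ∀ z : ℤ, (5 : ℤ) ∣ z ↔ (z : ZMod 5) = 0 := fun z => (ZMod.intCast_zmod_eq_zero_iff_dvd z 5).symm
    simp only [cst] at *
    apply key
    · rw [← h.1]; push_cast [mul_a, mul_c]
      have : (5 : ZMod 5) = 0 := by decide
      linear_combination (x.c * y.c : ZMod 5) * this
    · rw [← h.2]; push_cast [mul_b, mul_c]
      have : (5 : ZMod 5) = 0 := by decide
      linear_combination (2 * (x.c * y.c) + x.c * y.b + x.b * y.c : ZMod 5) * this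

/-- the norm form of the residue field at `p289` -/
def n17 (x : Zt) : ZMod 17 := ((x.a - 13 * x.c : ℤ) : ZMod 17) ^ 2
  - 8 * ((x.a - 13 * x.c : ℤ) : ZMod 17) * ((x.b - 8 * x.c : ℤ) : ZMod 17)
  + 13 * ((x.b - 8 * x.c : ℤ) : ZMod 17) ^ 2

theorem n17_zero (x : Zt) : n17 x = 0 ↔ p289 ∣ x := by
  rw [dvd_p289, n17]
  have cst : ∀ z : ℤ, (17 : ℤ) ∣ z ↔ (z : ZMod 17) = 0 := fun z => (ZMod.intCast_zmod_eq_zero_iff_dvd z 17).symm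
  rw [cst, cst]
  have key : ∀ u v : ZMod 17, u ^ 2 - 8 * u * v + 13 * v ^ 2 = 0 ↔ (u = 0 ∧ v = 0) := by decide +kernel
  exact key _ _

theorem n17_mul (x y : Zt) : n17 (x * y) = n17 x * n17 y := by
  have h17 : (17 : ZMod 17) = 0 := by decide
  have key : ∀ a b c a' b' c' u v : ZMod 17,
      u = (a - 13 * c) * (a' - 13 * c') - 13 * ((b - 8 * c) * (b' - 8 * c')) →
      v = (a - 13 * c) * (b' - 8 * c') + (b - 8 * c) * (a' - 13 * c') - 8 * ((b - 8 * c) * (b' - 8 * c')) →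
      u ^ 2 - 8 * u * v + 13 * v ^ 2 = ((a - 13 * c) ^ 2 - 8 * (a - 13 * c) * (b - 8 * c) + 13 * (b - 8 * c) ^ 2)
      * ((a' - 13 * c') ^ 2 - 8 * (a' - 13 * c') * (b' - 8 * c') + 13 * (b' - 8 * c') ^ 2) := by
    intro a b c a' b' c' u v hu hv
    subst hu hv
    ring
  simp only [n17]
  push_cast
  apply key
  · push_cast [mul_a, mul_c]
    linear_combination (39 * (x.c * y.c : ZMod 17) - 6 * (x.b * y.c + x.c * y.b : ZMod 17)) * h17
  · push_cast [mul_b, mul_c]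
    linear_combination (18 * (x.c * y.c : ZMod 17) - 3 * (x.b * y.c + x.c * y.b : ZMod 17)) * h17

theorem prime_p289 : Prime p289 := by
  refine ⟨by decide, fun h => ?_, fun x y h => ?_⟩
  · have h1 := (dvd_p289 1).1 h.dvd
    simp at h1
  · have : Fact (Nat.Prime 17) := ⟨by norm_num⟩
    rw [← n17_zero, n17_mul, mul_eq_zero] at h
    rwa [n17_zero, n17_zero] at h
end Zt

namespace Zt
open Cub

/-- Coefficients of the elliptic curve. -/
def cA : Zt := ⟨20, 18, -12⟩
def cB : Zt := ⟨0, 54, 0⟩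
def cD : Zt := ⟨-464, 792, -156⟩
def A0 : Zt := ⟨9, -6, 5⟩

theorem cA_eq : cA = th ^ 4 * A0 := by decide
theorem cB_eq : cB = th ^ 4 * 27 := by decide
theorem cD_eq : cD = th ^ 8 * (p289 ^ 2 * p25) := by decide
theorem cD_eq' : cD = cA ^ 2 - 4 * cB := by decide
theorem two_eq : (2 : Zt) = th ^ 3 := by decide
theorem three_eq : (3 : Zt) = ep * p3 ^ 3 := by decide
theorem th_ne : th ≠ 0 := prime_th.ne_zero

theorem odd_mul {x y : Zt} (hx : ¬ th ∣ x) (hy : ¬ th ∣ y) : ¬ th ∣ x * y := fun h =>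
  (prime_th.dvd_or_dvd h).elim hx hy
theorem odd_pow {x : Zt} (hx : ¬ th ∣ x) (n : ℕ) : ¬ th ∣ x ^ n := fun h =>
  hx (prime_th.dvd_of_dvd_pow h)
theorem odd_add {x y : Zt} (hx : ¬ th ∣ x) (hy : th ∣ y) : ¬ th ∣ x + y := fun h =>
  hx ((dvd_add_left hy).1 h)

theorem unit_not_dvd {u p : Zt} (hu : IsUnit u) (hp : Prime p) : ¬ p ∣ u := fun h =>
  hp.not_isUnit (isUnit_of_dvd_unit h hu)

/-- an element of odd valuation is not a square -/
theorem odd_val_ne {x N : Zt} (k : ℕ) (hx : ¬ th ∣ x) (h : N ^ 2 = th ^ (2 * k) * (th * x)) : False := by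
  obtain ⟨n, hn⟩ := PIDaux.sq_of_sq_mul (c := th ^ k) (F := th * x) (g := N) (pow_ne_zero _ th_ne)
    (by rw [h, ← pow_mul, mul_comm k 2])
  have h1 : th ∣ n := prime_th.dvd_of_dvd_pow (n := 2) (by rw [← hn]; exact Dvd.intro _ rfl)
  obtain ⟨m, rfl⟩ := h1
  apply hx
  refine ⟨m ^ 2, ?_⟩
  apply mul_left_cancel₀ th_ne
  rw [hn]; ring

/-- Reduction modulo 8. -/
def r8 : Zt →+* Cub (ZMod 8) := map (Int.castRingHom (ZMod 8))

/-- squares modulo 8 -/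
def sq8 : List (Cub (ZMod 8)) := [⟨0, 0, 0⟩, ⟨0, 0, 1⟩, ⟨0, 0, 4⟩, ⟨0, 2, 0⟩, ⟨0, 2, 4⟩, ⟨0, 6, 5⟩, ⟨1, 0, 0⟩, ⟨1, 0, 4⟩, ⟨1, 2, 1⟩, ⟨1, 2, 2⟩, ⟨1, 2, 5⟩, ⟨1, 2, 6⟩, ⟨1, 4, 0⟩, ⟨1, 4, 4⟩, ⟨1, 6, 1⟩, ⟨1, 6, 2⟩, ⟨1, 6, 5⟩, ⟨1, 6, 6⟩, ⟨4, 0, 0⟩, ⟨4, 0, 4⟩, ⟨4, 2, 0⟩, ⟨4, 2, 1⟩, ⟨4, 2, 4⟩, ⟨4, 4, 1⟩, ⟨5, 0, 3⟩, ⟨5, 0, 7⟩, ⟨5, 4, 3⟩, ⟨5, 4, 7⟩]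

/-- odd squares modulo 8 -/
def osq8 : List (Cub (ZMod 8)) := [⟨1, 0, 0⟩, ⟨1, 0, 4⟩, ⟨1, 2, 1⟩, ⟨1, 2, 2⟩, ⟨1, 2, 5⟩, ⟨1, 2, 6⟩, ⟨1, 4, 0⟩, ⟨1, 4, 4⟩, ⟨1, 6, 1⟩, ⟨1, 6, 2⟩, ⟨1, 6, 5⟩, ⟨1, 6, 6⟩, ⟨5, 0, 3⟩, ⟨5, 0, 7⟩, ⟨5, 4, 3⟩, ⟨5, 4, 7⟩]

theorem mem_sq8 (x : Zt) : r8 x ^ 2 ∈ sq8 := by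
  have key : ∀ a b c : ZMod 8, (⟨a, b, c⟩ * ⟨a, b, c⟩ : Cub (ZMod 8)) ∈ sq8 := by decide +kernel
  rw [sq]; exact key _ _ _

theorem mem_osq8 (x : Zt) (hx : ¬ th ∣ x) : r8 x ^ 2 ∈ osq8 := by
  have key : ∀ a b c : ZMod 8, a.val % 2 = 1 → (⟨a, b, c⟩ * ⟨a, b, c⟩ : Cub (ZMod 8)) ∈ osq8 := by
    decide +kernel
  rw [sq]
  refine key _ _ _ ?_
  rw [dvd_th] at hx
  change ((x.a : ℤ) : ZMod 8).val % 2 = 1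
  have := ZMod.val_intCast (n := 8) x.a
  push_cast at this
  omega

/-- The local obstruction at level 8. -/
def bad (S T : List (Cub (ZMod 8))) (c1 c2 c3 : Zt) : Bool :=
  S.all fun s => T.all fun t => decide (r8 c1 * (s * s) + r8 c2 * (s * t) + r8 c3 * (t * t) ∉ sq8)

theorem bad_spec {S T : List (Cub (ZMod 8))} {c1 c2 c3 m e N : Zt} (h : bad S T c1 c2 c3 = true)
    (hm : r8 m ^ 2 ∈ S) (he : r8 e ^ 2 ∈ T) (hN : N ^ 2 = c1 * m ^ 4 + c2 * m ^ 2 * e ^ 2 + c3 * e ^ 4) :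
    False := by
  rw [bad, List.all_eq_true] at h
  have h1 := h _ hm
  rw [List.all_eq_true] at h1
  have h2 := of_decide_eq_true (h1 _ he)
  apply h2
  have := congrArg r8 hN
  simp only [map_add, _root_.map_mul, _root_.map_pow] at this
  convert mem_sq8 N using 1
  rw [this]; ring

/-- The possible values of the descent parameter, with the complementary factors of 27. -/
def Par (d C : Zt) : Prop :=
  (d = 1 ∧ C = 27) ∨ (d = -1 ∧ C = -27) ∨ (d = ep ∧ C = ⟨27, 27, 27⟩) ∨ (d = -ep ∧ C = ⟨-27, -27, -27⟩) ∨
  (d = p3 ∧ C = ⟨9, -9, 9⟩) ∨ (d = -p3 ∧ C = ⟨-9, 9, -9⟩) ∨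
  (d = ep * p3 ∧ C = ⟨9, 18, 9⟩) ∨ (d = -(ep * p3) ∧ C = ⟨-9, -18, -9⟩)

theorem Par.mul {d C : Zt} (h : Par d C) : d * C = 27 := by
  rcases h with ⟨rfl, rfl⟩ | ⟨rfl, rfl⟩ | ⟨rfl, rfl⟩ | ⟨rfl, rfl⟩ | ⟨rfl, rfl⟩ | ⟨rfl, rfl⟩ | ⟨rfl, rfl⟩ |
    ⟨rfl, rfl⟩ <;> decide

theorem Par.ne {d C : Zt} (h : Par d C) : d ≠ 0 := by
  rintro rfl
  have := h.mul
  revert this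
  rw [zero_mul]; decide

theorem Par.odd {d C : Zt} (h : Par d C) : ¬ th ∣ d := fun hd => by
  have h1 : th ∣ (27 : Zt) := by rw [← h.mul]; exact hd.mul_right _
  rw [dvd_th] at h1
  simp at h1

/-- no point with the valuation of the numerator equal to one -/
theorem Par.loc1 {d C m e N : Zt} (h : Par d C) (hm : ¬ th ∣ m) (he : ¬ th ∣ e)
    (hN : N ^ 2 = d * m ^ 4 + (th ^ 2 * A0) * m ^ 2 * e ^ 2 + C * e ^ 4) : False := by
  refine bad_spec (S := osq8) (T := osq8) ?_ (mem_osq8 m hm) (mem_osq8 e he) hN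
  rcases h with ⟨rfl, rfl⟩ | ⟨rfl, rfl⟩ | ⟨rfl, rfl⟩ | ⟨rfl, rfl⟩ | ⟨rfl, rfl⟩ | ⟨rfl, rfl⟩ | ⟨rfl, rfl⟩ |
    ⟨rfl, rfl⟩ <;> decide +kernel

theorem Par.loc2 {d C m e N : Zt} (h : Par d C) (hm : ¬ th ∣ m)
    (hN : N ^ 2 = d * m ^ 4 + cA * m ^ 2 * e ^ 2 + (th ^ 4 * C) * e ^ 4) :
    d = 1 ∨ d = -(ep * p3) := by
  have fin : bad osq8 sq8 d cA (th ^ 4 * C) = true → d = 1 ∨ d = -(ep * p3) := fun hb =>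
    (bad_spec hb (mem_osq8 m hm) (mem_sq8 e) hN).elim
  rcases h with ⟨rfl, rfl⟩ | ⟨rfl, rfl⟩ | ⟨rfl, rfl⟩ | ⟨rfl, rfl⟩ | ⟨rfl, rfl⟩ | ⟨rfl, rfl⟩ | ⟨rfl, rfl⟩ |
    ⟨rfl, rfl⟩
  · exact Or.inl rfl
  · apply fin; decide +kernel
  · apply fin; decide +kernel
  · apply fin; decide +kernel
  · apply fin; decide +kernel
  · apply fin; decide +kernel
  · apply fin; decide +kernel
  · exact Or.inr rfl

theorem loc3 {m e N : Zt} (hm : ¬ th ∣ m)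
    (hN : N ^ 2 = -(ep * p3) * m ^ 4 + cA * m ^ 2 * e ^ 2 + (th ^ 4 * ⟨-9, -18, -9⟩) * e ^ 4) :
    ¬ th ^ 2 ∣ e := by
  rintro ⟨f, rfl⟩
  refine bad_spec (S := osq8) (T := sq8) (c1 := -(ep * p3)) (c2 := cA * th ^ 4)
    (c3 := th ^ 12 * ⟨-9, -18, -9⟩) ?_ (mem_osq8 m hm) (mem_sq8 f) (hN.trans (by ring))
  decide +kernel

theorem prime_assoc {p q x : Zt} (hp : Prime p) (hq : Prime q) (h : p ∣ q) (hx : p ∣ x) : q ∣ x :=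
  ((hp.dvd_prime_iff_associated hq).1 h).dvd'.trans hx

theorem ep_unit : IsUnit ep := ⟨epu, rfl⟩

theorem par_of {δ B' : Zt} (hd : Squarefree δ) (ho : ¬ th ∣ δ) (hB : δ * B' = cB) :
    ∃ d C w : Zt, IsUnit w ∧ Par d C ∧ δ = d * w ^ 2 := by
  have hcB : cB ≠ 0 := by decide
  have hpr : ∀ p, Prime p → p ∣ δ → p3 ∣ δ ∧ p ∣ p3 := by
    intro p hp hpd
    have h1 : p ∣ th ^ 4 * (ep * p3 ^ 3) ^ 3 := by
      have : th ^ 4 * (ep * p3 ^ 3) ^ 3 = cB := by decide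
      rw [this, ← hB]; exact hpd.mul_right _
    rcases hp.dvd_or_dvd h1 with h2 | h2
    · exact absurd (prime_assoc hp prime_th (hp.dvd_of_dvd_pow h2) hpd) ho
    · rcases hp.dvd_or_dvd (hp.dvd_of_dvd_pow h2) with h3 | h3
      · exact absurd h3 (unit_not_dvd ep_unit hp)
      · have h4 := hp.dvd_of_dvd_pow h3
        exact ⟨prime_assoc hp prime_p3 h4 hpd, h4⟩
  rcases PIDaux.peel hd prime_p3 with h | ⟨δ', rfl, h1, h2⟩
  · have hu : IsUnit δ := PIDaux.unit_of_no_prime hd.ne_zero fun p hp hpd => h (hpr p hp hpd).1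
    obtain ⟨s, w, hw, rfl, hs⟩ := unit_mod_sq δ hu
    rcases hs with rfl | rfl | rfl | rfl
    · exact ⟨_, _, w, hw, Or.inl ⟨rfl, rfl⟩, rfl⟩
    · exact ⟨_, _, w, hw, Or.inr (Or.inl ⟨rfl, rfl⟩), rfl⟩
    · exact ⟨_, _, w, hw, Or.inr (Or.inr (Or.inl ⟨rfl, rfl⟩)), rfl⟩
    · exact ⟨_, _, w, hw, Or.inr (Or.inr (Or.inr (Or.inl ⟨rfl, rfl⟩))), rfl⟩
  · have hu : IsUnit δ' := PIDaux.unit_of_no_prime h2.ne_zero fun p hp hpd =>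
      h1 (prime_assoc hp prime_p3 (hpr p hp (hpd.mul_left _)).2 hpd)
    obtain ⟨s, w, hw, rfl, hs⟩ := unit_mod_sq δ' hu
    rcases hs with rfl | rfl | rfl | rfl
    · exact ⟨p3, _, w, hw, Or.inr (Or.inr (Or.inr (Or.inr (Or.inl ⟨rfl, rfl⟩)))), by ring⟩
    · exact ⟨-p3, _, w, hw, Or.inr (Or.inr (Or.inr (Or.inr (Or.inr (Or.inl ⟨rfl, rfl⟩))))), by ring⟩
    · exact ⟨ep * p3, _, w, hw, Or.inr (Or.inr (Or.inr (Or.inr (Or.inr (Or.inr (Or.inl ⟨rfl, rfl⟩)))))), by ring⟩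
    · exact ⟨-(ep * p3), _, w, hw, Or.inr (Or.inr (Or.inr (Or.inr (Or.inr (Or.inr (Or.inr ⟨rfl, rfl⟩)))))), by ring⟩

theorem odd27 : ¬ th ∣ (27 : Zt) := by rw [dvd_th]; simp

/-- First descent. -/
theorem S1 {a b z : Zt} (ha : a ≠ 0) (hb : b ≠ 0)
    (h : a * b * (a ^ 2 + cA * a * b + cB * b ^ 2) = z ^ 2) :
    ∃ d C m e N : Zt, Par d C ∧ IsCoprime m e ∧ m ≠ 0 ∧ e ≠ 0 ∧ a * e ^ 2 = d * m ^ 2 * b ∧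
      N ^ 2 = d * m ^ 4 + cA * m ^ 2 * e ^ 2 + (th ^ 4 * C) * e ^ 4 ∧
      (th ^ 2 ∣ m ∨ (¬ th ∣ m ∧ d = 1 ∧ C = 27) ∨
        (¬ th ∣ m ∧ d = -(ep * p3) ∧ C = ⟨-9, -18, -9⟩ ∧ ¬ th ^ 2 ∣ e)) := by
  obtain ⟨δ, B', m, e, N, hd, hB, hme, hde, hm0, he0, hae, hN⟩ := PIDaux.descent ha hb h
  have hodd : ¬ th ∣ δ := by
    intro hdv
    rcases PIDaux.peel hd prime_th with h1 | ⟨δ', rfl, h1, h2⟩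
    · exact h1 hdv
    have hcp : IsCoprime (th ^ 3) δ' :=
      (prime_th.irreducible.coprime_iff_not_dvd.2 h1).pow_left
    have h3 : δ' * B' = th ^ 3 * 27 := by
      apply mul_left_cancel₀ th_ne
      rw [← mul_assoc, hB]; decide
    obtain ⟨B2, rfl⟩ : th ^ 3 ∣ B' := hcp.dvd_of_dvd_mul_left ⟨27, h3⟩
    have h4 : δ' * B2 = 27 := by
      apply mul_left_cancel₀ (pow_ne_zero 3 th_ne); linear_combination h3
    have hB2 : ¬ th ∣ B2 := fun hh => odd27 (by rw [← h4]; exact hh.mul_left _)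
    by_cases hm : th ∣ m
    · obtain ⟨m1, rfl⟩ := hm
      have heo : ¬ th ∣ e := fun hh => PIDaux.coprime_prime hme prime_th (Dvd.intro _ rfl) hh
      refine odd_val_ne 1 (x := B2 * e ^ 4 + th * (th * δ' * m1 ^ 4 + th ^ 2 * A0 * m1 ^ 2 * e ^ 2)) (N := N) ?_ ?_
      · exact odd_add (odd_mul hB2 (odd_pow heo 4)) (Dvd.intro _ rfl)
      · rw [hN, cA_eq]; ring
    · refine odd_val_ne 0 (x := δ' * m ^ 4 + th * (th ^ 2 * A0 * m ^ 2 * e ^ 2 + th * B2 * e ^ 4)) (N := N) ?_ ?_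
      · exact odd_add (odd_mul h1 (odd_pow hm 4)) (Dvd.intro _ rfl)
      · rw [hN, cA_eq]; ring
  obtain ⟨d, C, w, hw, hP, rfl⟩ := par_of hd hodd hB
  have hw0 : w ≠ 0 := hw.ne_zero
  have hC : w ^ 2 * B' = th ^ 4 * C := by
    apply mul_left_cancel₀ hP.ne
    have := hP.mul
    rw [cB_eq] at hB
    linear_combination hB - th ^ 4 * this
  have hN' : (w * N) ^ 2 = d * (w * m) ^ 4 + cA * (w * m) ^ 2 * e ^ 2 + (th ^ 4 * C) * e ^ 4 := by
    rw [← hC]; linear_combination w ^ 2 * hN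
  have hcop : IsCoprime (w * m) e := IsCoprime.mul_left ((isCoprime_one_left).of_isCoprime_of_dvd_left hw.dvd) hme
  refine ⟨d, C, w * m, e, w * N, hP, hcop, mul_ne_zero hw0 hm0, he0, by rw [hae]; ring, hN', ?_⟩
  generalize w * m = m at *
  generalize w * N = N at *
  by_cases hm : th ∣ m
  · left
    obtain ⟨m1, rfl⟩ := hm
    have heo : ¬ th ∣ e := fun hh => PIDaux.coprime_prime hcop prime_th (Dvd.intro _ rfl) hh
    by_cases hm1 : th ∣ m1
    · rw [sq]; exact mul_dvd_mul_left _ hm1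
    · exfalso
      obtain ⟨n, hn⟩ := PIDaux.sq_of_sq_mul (c := th ^ 2) (g := N)
        (F := d * m1 ^ 4 + (th ^ 2 * A0) * m1 ^ 2 * e ^ 2 + C * e ^ 4) (pow_ne_zero _ th_ne)
        (by rw [hN', cA_eq]; ring)
      exact hP.loc1 hm1 heo hn.symm
  · right
    rcases hP.loc2 hm hN' with rfl | rfl
    · left
      have := hP.mul
      exact ⟨hm, rfl, by rw [← this, one_mul]⟩
    · right
      have h27 := hP.mul
      have hC' : C = ⟨-9, -18, -9⟩ := by
        apply mul_left_cancel₀ hP.ne; rw [h27]; decide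
      subst hC'
      exact ⟨hm, rfl, rfl, loc3 hm hN'⟩

end Zt

namespace Zt
open Cub

/-- Reduction modulo 16. -/
def r16 : Zt →+* Cub (ZMod 16) := map (Int.castRingHom (ZMod 16))

/-- bit mask of the squares modulo 16 -/
def sqMask : ℕ := 147589944324422271786344982917741774315115208059449721940447267261264328667146607425380339324029446512795262521882446086274887068178596865728021418126659710838482543937585582178629384635955447332459347079174774568362358337941926216617079781596875918851831841834477613763974554883716103887359567171071104948294100559312081660532434292291070893726251973781947092718464035236080129425656300058170744959001363672209680724137635675930246244274738338581370824865723624514444249174432258704080000658968665327479944671741099389389780409473887126973667665026136498828284123225388233852593289536257847403158163395552519763421449101936560784799248377947676330385174011941753535596409225697607872430239521293693934923812336620890544453744316791805132443989933387859621533415763491888648803652300333024147404116439409321432225954502836503862210072966878104754962741850053089972442026081439490513976401132346543998327416652462412049358604521919478271141556752516233818507840056405583187055028319099262967885239207128396837669473664494175259343855087623299219302923022516810154515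

/-- bit mask of the odd squares modulo 16 -/
def osqMask : ℕ := 147589944324422271786344982917741774315115208059449721940447267261264328667146588681091564796553114424822997333600459451152755411477799004660480464758924220155124346562290102008520855537520680418495900556966160235361381095462646908903798717787585016062635609593753536407421540972591469014371644144657533599210406403627855635698918242275394579772979640701857909900911430023534872347048663311136969491009794524069429311824576273359936281383925155752588532603208907725589043697487141676977688168547761617646817907443493773137096043614941296503390959396839081782829411805246313747338043179954939519417932222862974834937895529746321243988379339364960444410212407622593363794163260747226429725862571040648157704459522654971392671915617718743903690717737037443992175887661531869624750861204268433908925614285630479836189796684878689792458254189935777952108457649724107518230255194484419175393567375463338507781434242626520772612293635224138992680907129335664158800407974188219520589271747327713649018541892308890927147849857259049311680260665125748939586016158711923343360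

/-- membership test for a bit mask -/
def tst (M : ℕ) (x : Cub (ZMod 16)) : Bool :=
  M.testBit (x.a.val * 256 + x.b.val * 16 + x.c.val)

theorem mem_sq16_key : ∀ a b c : ZMod 16,
    tst sqMask (⟨a, b, c⟩ * ⟨a, b, c⟩ : Cub (ZMod 16)) = true := by decide +kernel

theorem mem_osq16_key : ∀ a b c : ZMod 16, a.val % 2 = 1 →
    tst osqMask (⟨a, b, c⟩ * ⟨a, b, c⟩ : Cub (ZMod 16)) = true := by decide +kernel

theorem mem_sq16 (x : Zt) : tst sqMask (r16 x ^ 2) = true := by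
  rw [sq]; exact mem_sq16_key _ _ _

theorem mem_osq16 (x : Zt) (hx : ¬ th ∣ x) : tst osqMask (r16 x ^ 2) = true := by
  rw [sq]
  refine mem_osq16_key _ _ _ ?_
  rw [dvd_th] at hx
  change ((x.a : ℤ) : ZMod 16).val % 2 = 1
  have := ZMod.val_intCast (n := 16) x.a
  push_cast at this
  omega

/-- The local obstruction at level 16. -/
def bad16 (c1 c2 c3 : Zt) : Prop := ∀ a b c : ZMod 16, tst osqMask ⟨a, b, c⟩ = true →
  tst sqMask (r16 c1 * (⟨a, b, c⟩ * ⟨a, b, c⟩) + r16 c2 * ⟨a, b, c⟩ + r16 c3) = false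

instance (c1 c2 c3 : Zt) : Decidable (bad16 c1 c2 c3) := by unfold bad16; infer_instance

theorem bad16_spec {c1 c2 c3 m e N : Zt} (h : bad16 c1 c2 c3)
    (hm : ¬ th ∣ m) (he : ¬ th ∣ e) (hN : N ^ 2 = c1 * m ^ 4 + c2 * m ^ 2 * e ^ 2 + c3 * e ^ 4) :
    False := by
  obtain ⟨v, u, huv⟩ : IsCoprime (th ^ 12) e :=
    (prime_th.irreducible.coprime_iff_not_dvd.2 he).pow_left
  have hu : ¬ th ∣ u := by
    intro hu
    have : th ∣ v * th ^ 12 + u * e :=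
      dvd_add ((dvd_pow_self th (by norm_num)).mul_left _) (hu.mul_right _)
    rw [huv] at this
    exact prime_th.not_isUnit (isUnit_of_dvd_one this)
  have h12 : r16 (th ^ 12) = 0 := by decide +kernel
  have hue : r16 u * r16 e = 1 := by
    have := congrArg r16 huv
    simpa [h12] using this
  have h2 := h _ _ _ (mem_osq16 (m * u) (odd_mul hm hu))
  have := congrArg r16 hN
  have h3 := mem_sq16 (N * u ^ 2)
  have h4 : r16 c1 * (r16 (m * u) ^ 2 * r16 (m * u) ^ 2) + r16 c2 * r16 (m * u) ^ 2 + r16 c3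
      = r16 (N * u ^ 2) ^ 2 := by
    simp only [map_add, _root_.map_mul, _root_.map_pow] at this ⊢
    generalize r16 u = U at *
    generalize r16 e = E at *
    generalize r16 m = M at *
    have hU2 : U ^ 2 * E ^ 2 = 1 := by rw [← mul_pow, hue, one_pow]
    have hU4 : U ^ 4 * E ^ 4 = 1 := by rw [← mul_pow, hue, one_pow]
    linear_combination (-(U ^ 4)) * this + (-r16 c2 * M ^ 2 * U ^ 2) * hU2 - r16 c3 * hU4
  rw [← h4] at h3
  exact absurd (h3.symm.trans h2) (by decide)

/-- the nontrivial classes of positive units -/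
def Par2 (d C : Zt) : Prop :=
  (d = ep ∧ C = p289 ^ 2 * p25 * epi) ∨ (d = ep * p25 ∧ C = p289 ^ 2 * epi)

theorem Par2.mul {d C : Zt} (h : Par2 d C) : d * C = p289 ^ 2 * p25 := by
  rcases h with ⟨rfl, rfl⟩ | ⟨rfl, rfl⟩ <;> decide

theorem Par2.contra {d C m e N : Zt} (h : Par2 d C) (hme : IsCoprime m e)
    (hN : N ^ 2 = d * m ^ 4 + (-2 * cA) * m ^ 2 * e ^ 2 + (th ^ 8 * C) * e ^ 4) : False := by
  by_cases hm : th ∣ m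
  · obtain ⟨m, rfl⟩ := hm
    have heo : ¬ th ∣ e := fun hh => PIDaux.coprime_prime hme prime_th (Dvd.intro _ rfl) hh
    by_cases hm : th ∣ m
    · obtain ⟨m, rfl⟩ := hm
      obtain ⟨n, hn⟩ := PIDaux.sq_of_sq_mul (c := th ^ 4) (g := N)
        (F := d * m ^ 4 + (-(th ^ 3 * A0)) * m ^ 2 * e ^ 2 + C * e ^ 4) (pow_ne_zero _ th_ne)
        (by rw [hN, cA_eq, two_eq]; ring)
      by_cases hm : th ∣ m
      · obtain ⟨m, rfl⟩ := hm
        refine bad_spec (S := sq8) (T := osq8) (c1 := th ^ 4 * d) (c2 := -(th ^ 5 * A0)) (c3 := C) ?_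
          (mem_sq8 m) (mem_osq8 e heo) (hn.symm.trans (by ring))
        rcases h with ⟨rfl, rfl⟩ | ⟨rfl, rfl⟩ <;> decide +kernel
      · refine bad16_spec ?_ hm heo hn.symm
        rcases h with ⟨rfl, rfl⟩ | ⟨rfl, rfl⟩ <;> decide +kernel
    · obtain ⟨n, hn⟩ := PIDaux.sq_of_sq_mul (c := th ^ 2) (g := N)
        (F := d * m ^ 4 + (-(th ^ 5 * A0)) * m ^ 2 * e ^ 2 + (th ^ 4 * C) * e ^ 4) (pow_ne_zero _ th_ne)
        (by rw [hN, cA_eq, two_eq]; ring)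
      refine bad_spec (S := osq8) (T := osq8) ?_ (mem_osq8 m hm) (mem_osq8 e heo) hn.symm
      rcases h with ⟨rfl, rfl⟩ | ⟨rfl, rfl⟩ <;> decide +kernel
  · refine bad_spec (S := osq8) (T := sq8) ?_ (mem_osq8 m hm) (mem_sq8 e) hN
    rcases h with ⟨rfl, rfl⟩ | ⟨rfl, rfl⟩ <;> decide +kernel

theorem re_cA : 0 < re cA := by
  rw [re_def]; simp only [cA]; push_cast; nlinarith [rt_lo, rt2_hi]
theorem re_cD : 0 < re cD := by
  rw [re_def]; simp only [cD]; push_cast; nlinarith [rt_lo, rt2_hi]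
theorem re_ep : 0 < re ep := by
  rw [re_def]; simp only [ep]; push_cast; nlinarith [rt_lo, rt2_hi]
theorem re_p25 : 0 < re p25 := by
  rw [re_def]; simp only [p25]; push_cast; nlinarith [rt_lo, rt2_hi]

theorem n17_add (x y : Zt) : n17 (x + p289 * y) = n17 x := by
  have h17 : (17 : ZMod 17) = 0 := by decide
  have e1 : (((x + p289 * y).a - 13 * (x + p289 * y).c : ℤ) : ZMod 17) = ((x.a - 13 * x.c : ℤ) : ZMod 17) := by
    simp only [p289, mul_a, mul_b, mul_c, add_a, add_b, add_c]; push_cast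
    linear_combination (3 * y.a - 2 * y.b + y.c : ZMod 17) * h17
  have e2 : (((x + p289 * y).b - 8 * (x + p289 * y).c : ℤ) : ZMod 17) = ((x.b - 8 * x.c : ℤ) : ZMod 17) := by
    simp only [p289, mul_a, mul_b, mul_c, add_a, add_b, add_c]; push_cast
    linear_combination (2 * y.a - y.b : ZMod 17) * h17
  simp only [n17]
  rw [e1, e2]

theorem nonres289 {N x y : Zt} (h : N ^ 2 = -2 * cA * x ^ 2 + p289 * y) : p289 ∣ x := by
  have h1 := congrArg n17 h
  rw [n17_add, sq, sq, n17_mul N N, n17_mul (-2 * cA) (x * x), n17_mul x x] at h1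
  have h2 : n17 (-2 * cA) = 7 := by decide +kernel
  have key : ∀ x y : ZMod 17, x * x = 7 * (y * y) → y = 0 := by decide +kernel
  rw [h2] at h1
  exact (n17_zero x).1 (key _ _ h1)

theorem S2core {F e z : Zt} (hF : F ≠ 0) (he : e ≠ 0)
    (h : F * e ^ 2 * (F ^ 2 + (-2 * cA) * F * e ^ 2 + cD * (e ^ 2) ^ 2) = z ^ 2) :
    (∃ k, F = k ^ 2) ∨ (∃ f k, f ≠ 0 ∧ F * f ^ 2 = p25 * k ^ 2) := by
  obtain ⟨δ, B', m, f, N, hd, hB, hmf, hdf, hm0, hf0, hFf, hN⟩ :=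
    PIDaux.descent hF (pow_ne_zero 2 he) h
  have hpos : 0 < re δ := by
    by_contra! hneg
    have hneg' : re δ < 0 := lt_of_le_of_ne hneg (re_ne_zero hd.ne_zero)
    have h1 : re δ * re B' = re cD := by rw [← map_mul, hB]
    have h2 : re B' < 0 := by
      by_contra! h3
      nlinarith [re_cD, mul_nonneg (neg_nonneg.2 hneg) h3]
    have h4 := congrArg re hN
    simp only [map_add, map_mul, map_pow, map_neg, map_ofNat] at h4
    have h5 : 0 < re m ^ 4 := by
      have := re_ne_zero hm0
      positivity
    have h6 : 0 ≤ re cA * (re m ^ 2 * re f ^ 2) := by have := re_cA; positivity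
    have h7 : 0 ≤ re f ^ 4 := by positivity
    nlinarith [sq_nonneg (re N), mul_pos (neg_pos.2 hneg') h5, mul_nonneg (neg_nonneg.2 h2.le) h7]
  have h289 : ¬ p289 ∣ δ := by
    intro hdv
    have hsq : ∀ {d m : Zt}, p289 ^ 2 ∣ d * m ^ 4 → ¬ p289 ∣ m → p289 ^ 2 ∣ d := by
      intro d m h1 h2
      have : IsCoprime (p289 ^ 2) (m ^ 4) :=
        (prime_p289.irreducible.coprime_iff_not_dvd.2 h2).pow
      exact this.dvd_of_dvd_mul_right h1
    obtain ⟨δ', hδ'⟩ := hdv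
    have hδo : ¬ p289 ∣ δ' := by
      intro h1
      apply prime_p289.not_isUnit
      apply hd p289
      rw [hδ']; exact mul_dvd_mul_left _ h1
    have h1 : δ' * B' = p289 * (th ^ 8 * p25) := by
      apply mul_left_cancel₀ prime_p289.ne_zero
      rw [← mul_assoc, ← hδ', hB, cD_eq]; ring
    have h2 : p289 ∣ B' := (prime_p289.dvd_or_dvd (Dvd.intro _ h1.symm)).resolve_left hδo
    obtain ⟨B2, hB2⟩ := h2
    have h3 : p289 ∣ m * f := by
      apply nonres289 (N := N) (y := δ' * m ^ 4 + B2 * f ^ 4)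
      rw [hN, hB2, hδ']; ring
    have hB2o : ¬ p289 ∣ B2 := by
      intro h4
      have h5 : δ' * B2 = th ^ 8 * p25 := by
        apply mul_left_cancel₀ prime_p289.ne_zero
        rw [← h1, hB2]; ring
      have h6 : p289 ∣ th ^ 8 * p25 := by rw [← h5]; exact h4.mul_left _
      rw [dvd_p289] at h6
      revert h6; decide
    have hpN : p289 ∣ N := by
      apply prime_p289.dvd_of_dvd_pow (n := 2)
      rcases h3 with ⟨k, hk⟩
      refine ⟨δ' * m ^ 4 + B2 * f ^ 4 + (-2 * cA) * p289 * k ^ 2, ?_⟩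
      rw [hN, hB2, hδ']
      linear_combination (-2 * cA) * (m * f + p289 * k) * hk
    obtain ⟨n, rfl⟩ := hpN
    rcases prime_p289.dvd_or_dvd h3 with h4 | h4
    · have h5 : ¬ p289 ∣ f := fun hh => PIDaux.coprime_prime hmf prime_p289 h4 hh
      obtain ⟨k, rfl⟩ := h4
      have : p289 ^ 2 ∣ B' * f ^ 4 := ⟨n ^ 2 - δ * p289 ^ 2 * k ^ 4 + 2 * cA * k ^ 2 * f ^ 2, by
        linear_combination -hN⟩
      have h6 := hsq this h5
      rw [hB2, sq] at h6
      exact hB2o ((mul_dvd_mul_iff_left prime_p289.ne_zero).1 h6)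
    · have h5 : ¬ p289 ∣ m := fun hh => PIDaux.coprime_prime hmf prime_p289 hh h4
      obtain ⟨k, rfl⟩ := h4
      have : p289 ^ 2 ∣ δ * m ^ 4 := ⟨n ^ 2 - B' * p289 ^ 2 * k ^ 4 + 2 * cA * k ^ 2 * m ^ 2, by
        linear_combination -hN⟩
      have h6 := hsq this h5
      rw [hδ', sq] at h6
      exact hδo ((mul_dvd_mul_iff_left prime_p289.ne_zero).1 h6)
  have hth : ¬ th ∣ δ := by
    intro hdv
    rcases PIDaux.peel hd prime_th with h1 | ⟨δ', rfl, h1, h2⟩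
    · exact h1 hdv
    have hcp : IsCoprime (th ^ 7) δ' :=
      (prime_th.irreducible.coprime_iff_not_dvd.2 h1).pow_left
    have h3 : δ' * B' = th ^ 7 * (p289 ^ 2 * p25) := by
      apply mul_left_cancel₀ th_ne
      rw [← mul_assoc, hB, cD_eq]; ring
    obtain ⟨B2, rfl⟩ : th ^ 7 ∣ B' := hcp.dvd_of_dvd_mul_left ⟨_, h3⟩
    have h4 : δ' * B2 = p289 ^ 2 * p25 := by
      apply mul_left_cancel₀ (pow_ne_zero 7 th_ne); linear_combination h3
    have hB2 : ¬ th ∣ B2 := fun hh => by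
      have : th ∣ p289 ^ 2 * p25 := by rw [← h4]; exact hh.mul_left _
      rw [dvd_th] at this
      revert this; decide
    by_cases hm : th ∣ m
    · obtain ⟨m, rfl⟩ := hm
      have hfo : ¬ th ∣ f := fun hh => PIDaux.coprime_prime hmf prime_th (Dvd.intro _ rfl) hh
      by_cases hm : th ∣ m
      · obtain ⟨m, rfl⟩ := hm
        refine odd_val_ne 3 (x := B2 * f ^ 4 + th * (th * δ' * m ^ 4 - th ^ 3 * A0 * m ^ 2 * f ^ 2)) (N := N) ?_ ?_
        · exact odd_add (odd_mul hB2 (odd_pow hfo 4)) (Dvd.intro _ rfl)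
        · rw [hN, cA_eq, two_eq]; ring
      · refine odd_val_ne 2 (x := δ' * m ^ 4 + th * (th * B2 * f ^ 4 - th ^ 3 * A0 * m ^ 2 * f ^ 2)) (N := N) ?_ ?_
        · exact odd_add (odd_mul h1 (odd_pow hm 4)) (Dvd.intro _ rfl)
        · rw [hN, cA_eq, two_eq]; ring
    · refine odd_val_ne 0 (x := δ' * m ^ 4 + th * (th ^ 5 * B2 * f ^ 4 - th ^ 5 * A0 * m ^ 2 * f ^ 2)) (N := N) ?_ ?_
      · exact odd_add (odd_mul h1 (odd_pow hm 4)) (Dvd.intro _ rfl)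
      · rw [hN, cA_eq, two_eq]; ring
  have hpr : ∀ p, Prime p → p ∣ δ → p25 ∣ δ ∧ p ∣ p25 := by
    intro p hp hpd
    have h1 : p ∣ th ^ 8 * (p289 ^ 2 * p25) := by
      rw [← cD_eq, ← hB]; exact hpd.mul_right _
    rcases hp.dvd_or_dvd h1 with h2 | h2
    · exact absurd (prime_assoc hp prime_th (hp.dvd_of_dvd_pow h2) hpd) hth
    · rcases hp.dvd_or_dvd h2 with h3 | h3
      · exact absurd (prime_assoc hp prime_p289 (hp.dvd_of_dvd_pow h3) hpd) h289
      · exact ⟨prime_assoc hp prime_p25 h3 hpd, h3⟩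
  have hfin : ∀ d C w : Zt, IsUnit w → Par2 d C → δ = d * w ^ 2 → False := by
    intro d C w hw hP hδ
    have hw0 : w ≠ 0 := hw.ne_zero
    have hd0 : d ≠ 0 := by rintro rfl; rw [zero_mul] at hδ; exact hd.ne_zero hδ
    have hC : w ^ 2 * B' = th ^ 8 * C := by
      apply mul_left_cancel₀ hd0
      have := hP.mul
      rw [cD_eq, hδ] at hB
      linear_combination hB - th ^ 8 * this
    refine hP.contra (m := w * m) (e := f) (N := w * N)
      (IsCoprime.mul_left ((isCoprime_one_left).of_isCoprime_of_dvd_left hw.dvd) hmf) ?_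
    rw [← hC]; rw [hδ] at hN; linear_combination w ^ 2 * hN
  have sgn : ∀ w : Zt, 0 ≤ re w ^ 2 := fun w => sq_nonneg _
  have e1 := re_ep
  have e2 := re_p25
  rcases PIDaux.peel hd prime_p25 with h1 | ⟨δ', hδ', h1, h2⟩
  · have hu : IsUnit δ := PIDaux.unit_of_no_prime hd.ne_zero fun p hp hpd => h1 (hpr p hp hpd).1
    obtain ⟨s, w, hw, hδ, hs⟩ := unit_mod_sq δ hu
    rcases hs with rfl | rfl | rfl | rfl
    · left
      exact PIDaux.sq_of_sq_mul (c := f) (g := w * m * e) hf0 (by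
        rw [hδ] at hFf; linear_combination hFf)
    · rw [hδ] at hpos; simp at hpos; nlinarith [sgn w]
    · exact (hfin _ _ w hw (Or.inl ⟨rfl, rfl⟩) hδ).elim
    · rw [hδ] at hpos; simp at hpos; nlinarith [mul_nonneg e1.le (sgn w)]
  · have hu : IsUnit δ' := PIDaux.unit_of_no_prime h2.ne_zero fun p hp hpd =>
      h1 (prime_assoc hp prime_p25 (hpr p hp (by rw [hδ']; exact hpd.mul_left _)).2 hpd)
    obtain ⟨s, w, hw, hδ, hs⟩ := unit_mod_sq δ' hu
    rcases hs with rfl | rfl | rfl | rfl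
    · right
      refine ⟨f, w * m * e, hf0, ?_⟩
      rw [hδ', hδ] at hFf; linear_combination hFf
    · rw [hδ', hδ] at hpos; simp at hpos; nlinarith [mul_nonneg e2.le (sgn w)]
    · exact (hfin (ep * p25) _ w hw (Or.inr ⟨rfl, rfl⟩) (by rw [hδ', hδ]; ring)).elim
    · rw [hδ', hδ] at hpos; simp at hpos
      nlinarith [mul_nonneg e2.le (mul_nonneg e1.le (sgn w))]

/-- Second descent. -/
theorem S2 {M e N : Zt} (hM : M ≠ 0) (he : e ≠ 0)
    (hN : N ^ 2 = M ^ 4 + cA * M ^ 2 * e ^ 2 + cB * e ^ 4) :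
    ∃ ξ N' : Zt, N' ^ 2 = N ^ 2 ∧ ξ ^ 2 = cA * e ^ 2 + 2 * M ^ 2 + 2 * N' := by
  have hprod : (cA * e ^ 2 + 2 * M ^ 2 + 2 * N) * (cA * e ^ 2 + 2 * M ^ 2 - 2 * N) = cD * e ^ 4 := by
    rw [cD_eq']; linear_combination (-4) * hN
  have hne : cD * e ^ 4 ≠ 0 := mul_ne_zero (by decide) (pow_ne_zero _ he)
  have hF : cA * e ^ 2 + 2 * M ^ 2 + 2 * N ≠ 0 := left_ne_zero_of_mul (by rw [hprod]; exact hne)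
  have h1 := S2core (F := cA * e ^ 2 + 2 * M ^ 2 + 2 * N) (e := e)
    (z := 2 * M * e * (cA * e ^ 2 + 2 * M ^ 2 + 2 * N)) hF he (by
      rw [cD_eq']
      linear_combination (4 * e ^ 2 * (cA * e ^ 2 + 2 * M ^ 2 + 2 * N)) * hN)
  rcases h1 with ⟨k, hk⟩ | ⟨f, k, hf, hk⟩
  · exact ⟨k, N, rfl, hk.symm⟩
  · have hk0 : k ≠ 0 := by
      rintro rfl
      apply mul_ne_zero hF (pow_ne_zero 2 hf)
      rw [hk]; ring
    obtain ⟨g, hg⟩ := PIDaux.sq_of_sq_mul (c := k) (g := f * th ^ 4 * p289 * e ^ 2)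
      (F := cA * e ^ 2 + 2 * M ^ 2 - 2 * N) hk0 (by
        apply mul_left_cancel₀ prime_p25.ne_zero
        rw [cD_eq] at hprod
        linear_combination f ^ 2 * hprod - (cA * e ^ 2 + 2 * M ^ 2 - 2 * N) * hk)
    exact ⟨g, -N, by ring, by rw [← hg]; ring⟩

end Zt

namespace Zt
open Cub

/-- The chord construction with cleared denominators. -/
theorem chord {R : Type*} [CommRing R] {q r p e t A B D L K w : R}
    (h1 : q ^ 2 = p * (p ^ 2 + A * p * e ^ 2 + B * e ^ 4))
    (hR : r ^ 2 = -27 * (729 - 27 * A * t ^ 2 + B * t ^ 4))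
    (hD : D = p * t ^ 2 + 27 * e ^ 2) (hL : L = q * t ^ 3 - r * e ^ 3)
    (hw : w = e ^ 2 * t ^ 2 * D ^ 2)
    (hK : K = L ^ 2 - A * D ^ 2 * e ^ 2 * t ^ 2 - p * t ^ 2 * D ^ 2 + 27 * D ^ 2 * e ^ 2) :
    K * (K ^ 2 + A * K * w + B * w ^ 2) = (q * t ^ 3 * D ^ 3 + L * (K - p * t ^ 2 * D ^ 2)) ^ 2 := by
  subst hK hw hL hD
  linear_combination (
    (-1) * q ^ 2 * p ^ 3 * t ^ 18 + (-81) * q ^ 2 * p ^ 2 * e ^ 2 * t ^ 16 +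
    (-2187) * q ^ 2 * p * e ^ 4 * t ^ 14 + (-19683) * q ^ 2 * e ^ 6 * t ^ 12 +
    (2) * q * r * p ^ 3 * e ^ 3 * t ^ 15 + (162) * q * r * p ^ 2 * e ^ 5 * t ^ 13 +
    (4374) * q * r * p * e ^ 7 * t ^ 11 + (39366) * q * r * e ^ 9 * t ^ 9 +
    (1) * p ^ 6 * t ^ 18 + (1) * p ^ 5 * e ^ 2 * t ^ 18 * A + (81) * p ^ 5 * e ^ 2 * t ^ 16 +
    (135) * p ^ 4 * e ^ 4 * t ^ 16 * A + (27) * p ^ 3 * e ^ 6 * t ^ 16 * B +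
    (6561) * p ^ 3 * e ^ 6 * t ^ 14 * A + (-177147) * p ^ 3 * e ^ 6 * t ^ 12 +
    (2187) * p ^ 2 * e ^ 8 * t ^ 14 * B + (137781) * p ^ 2 * e ^ 8 * t ^ 12 * A +
    (-6377292) * p ^ 2 * e ^ 8 * t ^ 10 + (59049) * p * e ^ 10 * t ^ 12 * B +
    (1062882) * p * e ^ 10 * t ^ 10 * A + (-86093442) * p * e ^ 10 * t ^ 8 +
    (531441) * e ^ 12 * t ^ 10 * B + (-387420489) * e ^ 12 * t ^ 6) * h1 + (
    (-2) * q * r * p ^ 3 * e ^ 9 * t ^ 9 + (-162) * q * r * p ^ 2 * e ^ 11 * t ^ 7 +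
    (-4374) * q * r * p * e ^ 13 * t ^ 5 + (-39366) * q * r * e ^ 15 * t ^ 3 +
    (1) * r ^ 2 * p ^ 3 * e ^ 12 * t ^ 6 + (81) * r ^ 2 * p ^ 2 * e ^ 14 * t ^ 4 +
    (2187) * r ^ 2 * p * e ^ 16 * t ^ 2 + (19683) * r ^ 2 * e ^ 18 +
    (-1) * p ^ 6 * e ^ 6 * t ^ 12 + (-162) * p ^ 5 * e ^ 8 * t ^ 10 +
    (1) * p ^ 4 * e ^ 10 * t ^ 12 * B + (-54) * p ^ 4 * e ^ 10 * t ^ 10 * A +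
    (-8748) * p ^ 4 * e ^ 10 * t ^ 8 + (81) * p ^ 3 * e ^ 12 * t ^ 10 * B +
    (-5103) * p ^ 3 * e ^ 12 * t ^ 8 * A + (-177147) * p ^ 3 * e ^ 12 * t ^ 6 +
    (2187) * p ^ 2 * e ^ 14 * t ^ 8 * B + (-177147) * p ^ 2 * e ^ 14 * t ^ 6 * A +
    (19683) * p * e ^ 16 * t ^ 6 * B + (-2657205) * p * e ^ 16 * t ^ 4 * A +
    (43046721) * p * e ^ 16 * t ^ 2 + (-14348907) * e ^ 18 * t ^ 2 * A + (387420489) * e ^ 18) * hR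

theorem th3 : th ^ 3 = 2 := two_eq.symm

theorem chordA {m e N : Zt}
    (hN : N ^ 2 = -(ep * p3) * m ^ 4 + cA * m ^ 2 * e ^ 2 + (th ^ 4 * ⟨-9, -18, -9⟩) * e ^ 4) :
    (3 * (ep * p3 ^ 2) * ((3 - 4 * th) * m * e + th * N)) ^ 2 * e ^ 2 * th ^ 2 =
      (-(ep * p3) * m * N * th ^ 3 - 27 * (3 - 4 * th) * e ^ 3) ^ 2
      - cA * (-(ep * p3) * m ^ 2 * th ^ 2 + 27 * e ^ 2) ^ 2 * e ^ 2 * th ^ 2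
      - (-(ep * p3) * m ^ 2) * th ^ 2 * (-(ep * p3) * m ^ 2 * th ^ 2 + 27 * e ^ 2) ^ 2
      + 27 * (-(ep * p3) * m ^ 2 * th ^ 2 + 27 * e ^ 2) ^ 2 * e ^ 2 := by
  have e1 : ep = th - 1 := by decide
  have e2 : p3 = th + 1 := by decide
  have e3 : cA = 20 + 18 * th - 12 * th ^ 2 := by decide
  have e4 : (⟨-9, -18, -9⟩ : Zt) = -9 * (1 + th) ^ 2 := by decide
  rw [e4] at hN; rw [e1, e2, e3] at hN ⊢
  linear_combination (
    (-1) * N ^ 2 * m ^ 2 * th ^ 7 + (2) * N ^ 2 * m ^ 2 * th ^ 5 +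
    (-2) * N ^ 2 * m ^ 2 * th ^ 4 + (-1) * N ^ 2 * m ^ 2 * th ^ 3 +
    (4) * N ^ 2 * m ^ 2 * th ^ 2 + (-4) * N ^ 2 * m ^ 2 * th + (-2) * N ^ 2 * m ^ 2 +
    (9) * N ^ 2 * e ^ 2 * th ^ 7 + (18) * N ^ 2 * e ^ 2 * th ^ 6 +
    (-9) * N ^ 2 * e ^ 2 * th ^ 5 + (-18) * N ^ 2 * e ^ 2 * th ^ 4 +
    (27) * N ^ 2 * e ^ 2 * th ^ 3 + (-27) * N ^ 2 * e ^ 2 * th + (54) * N ^ 2 * e ^ 2 +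
    (-72) * N * m * e ^ 3 * th ^ 7 + (-90) * N * m * e ^ 3 * th ^ 6 +
    (180) * N * m * e ^ 3 * th ^ 5 + (90) * N * m * e ^ 3 * th ^ 4 +
    (-108) * N * m * e ^ 3 * th ^ 3 + (-1) * m ^ 6 * th ^ 9 + (3) * m ^ 6 * th ^ 7 +
    (-2) * m ^ 6 * th ^ 6 + (-3) * m ^ 6 * th ^ 5 + (6) * m ^ 6 * th ^ 4 +
    (-3) * m ^ 6 * th ^ 3 + (-6) * m ^ 6 * th ^ 2 + (4) * m ^ 6 * th + (2) * m ^ 6 +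
    (-12) * m ^ 4 * e ^ 2 * th ^ 9 + (18) * m ^ 4 * e ^ 2 * th ^ 8 +
    (44) * m ^ 4 * e ^ 2 * th ^ 7 + (-60) * m ^ 4 * e ^ 2 * th ^ 6 +
    (11) * m ^ 4 * e ^ 2 * th ^ 5 + (106) * m ^ 4 * e ^ 2 * th ^ 4 +
    (-154) * m ^ 4 * e ^ 2 * th ^ 3 + (22) * m ^ 4 * e ^ 2 * th ^ 2 +
    (143) * m ^ 4 * e ^ 2 * th + (-14) * m ^ 4 * e ^ 2 + (144) * m ^ 2 * e ^ 4 * th ^ 7 +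
    (72) * m ^ 2 * e ^ 4 * th ^ 6 + (81) * m ^ 2 * e ^ 4 * th ^ 5 +
    (-954) * m ^ 2 * e ^ 4 * th ^ 4 + (-837) * m ^ 2 * e ^ 4 * th ^ 3 +
    (1458) * m ^ 2 * e ^ 4 * th ^ 2 + (-432) * m ^ 2 * e ^ 4 * th + (-1080) * m ^ 2 * e ^ 4 +
    (486) * e ^ 6 * th ^ 4 + (-1458) * e ^ 6 * th ^ 2 + (-8748) * e ^ 6 * th + (13122) * e ^ 6) * th3 + (
    (8) * m ^ 2 * th ^ 2 + (-8) * m ^ 2 * th + (-4) * m ^ 2 + (-54) * e ^ 2 * th +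
    (108) * e ^ 2) * hN

theorem val_ex (x : Zt) (hx : x ≠ 0) : ∃ k u, x = th ^ k * u ∧ ¬ th ∣ u := by
  obtain ⟨n, a, h1, h2⟩ := WfDvdMonoid.max_power_factor hx prime_th.irreducible
  exact ⟨n, a, h2, h1⟩

theorem val_le {i j : ℕ} {u w : Zt} (hu : ¬ th ∣ u) (h : th ^ i * u = th ^ j * w) : j ≤ i := by
  by_contra! hlt
  obtain ⟨k, rfl⟩ := Nat.exists_eq_add_of_lt hlt
  apply hu
  refine ⟨th ^ k * w, ?_⟩
  apply mul_left_cancel₀ (pow_ne_zero i th_ne)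
  rw [h]; ring

theorem val_unique {i j : ℕ} {u w : Zt} (hu : ¬ th ∣ u) (hw : ¬ th ∣ w)
    (h : th ^ i * u = th ^ j * w) : i = j :=
  le_antisymm (val_le hw h.symm) (val_le hu h)

/-- One halving step, given a suitable half. -/
theorem stepA {M e N ξ d C m e1 N1 : Zt} (hMe : IsCoprime M e) (he : e ≠ 0)
    (hN : N ^ 2 = M ^ 4 + cA * M ^ 2 * e ^ 2 + cB * e ^ 4)
    (hξ : ξ ^ 2 = cA * e ^ 2 + 2 * M ^ 2 + 2 * N)
    (hP : Par d C) (hm0 : m ≠ 0) (he1 : e1 ≠ 0)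
    (ha : (M ^ 2 + N + M * ξ) * e1 ^ 2 = d * m ^ 2 * e ^ 2)
    (hN1 : N1 ^ 2 = d * m ^ 4 + cA * m ^ 2 * e1 ^ 2 + (th ^ 4 * C) * e1 ^ 4)
    (hm : ¬ th ∣ m) :
    ∃ i u w, ¬ th ∣ u ∧ ¬ th ∣ w ∧ e = th ^ (i + 3) * u ∧ e1 = th ^ i * w := by
  have hd0 := hP.ne
  have hdC : cB = th ^ 4 * (d * C) := by rw [hP.mul, cB_eq]
  have haa : (M ^ 2 + N + M * ξ) * (M ^ 2 + N - M * ξ) = cB * e ^ 4 := by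
    linear_combination hN - M ^ 2 * hξ
  have hb : (M ^ 2 + N - M * ξ) * (d * m ^ 2) = cB * e ^ 2 * e1 ^ 2 := by
    apply mul_left_cancel₀ (pow_ne_zero 2 he)
    linear_combination (-(M ^ 2 + N - M * ξ)) * ha + e1 ^ 2 * haa
  have h1 : (m * e1 * ξ) ^ 2 = (e * N1) ^ 2 := by
    apply mul_left_cancel₀ hd0
    have : ξ ^ 2 = (M ^ 2 + N + M * ξ) + (M ^ 2 + N - M * ξ) + cA * e ^ 2 := by
      linear_combination hξ
    linear_combination (d * m ^ 2 * e1 ^ 2) * this + d * m ^ 2 * ha + e1 ^ 2 * hb - d * e ^ 2 * hN1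
      + e ^ 2 * e1 ^ 4 * hdC
  have h2 : 2 * M * ξ * d * m ^ 2 * e1 ^ 2 = e ^ 2 * (d ^ 2 * m ^ 4 - cB * e1 ^ 4) := by
    linear_combination d * m ^ 2 * ha - e1 ^ 2 * hb
  have hdo := hP.odd
  have hN1o : ¬ th ∣ N1 := by
    intro hh
    have h3 : ¬ th ∣ d * m ^ 4 + th * (th ^ 3 * A0 * m ^ 2 * e1 ^ 2 + th ^ 3 * C * e1 ^ 4) :=
      odd_add (odd_mul hdo (odd_pow hm 4)) (Dvd.intro _ rfl)
    apply h3
    have : d * m ^ 4 + th * (th ^ 3 * A0 * m ^ 2 * e1 ^ 2 + th ^ 3 * C * e1 ^ 4) = N1 ^ 2 := by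
      rw [hN1, cA_eq]; ring
    rw [this]; exact dvd_pow hh two_ne_zero
  have hO : ¬ th ∣ d ^ 2 * m ^ 4 - cB * e1 ^ 4 := by
    have : d ^ 2 * m ^ 4 - cB * e1 ^ 4 = d ^ 2 * m ^ 4 + th * (-(th ^ 3 * 27) * e1 ^ 4) := by
      rw [cB_eq]; ring
    rw [this]
    exact odd_add (odd_mul (odd_pow hdo 2) (odd_pow hm 4)) (Dvd.intro _ rfl)
  obtain ⟨s, hs, h3⟩ : ∃ s : Zt, ¬ th ∣ s ∧
      e * (d ^ 2 * m ^ 4 - cB * e1 ^ 4) = th ^ 3 * (e1 * (M * s)) := by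
    have hds : ¬ th ∣ d * m * N1 := odd_mul (odd_mul hdo hm) hN1o
    rcases sq_eq_sq_iff_eq_or_eq_neg.1 h1 with h | h
    · refine ⟨d * m * N1, hds, ?_⟩
      apply mul_left_cancel₀ he
      rw [← two_eq]
      linear_combination (-1) * h2 + (2 * M * d * m * e1) * h
    · refine ⟨-(d * m * N1), by rwa [dvd_neg], ?_⟩
      apply mul_left_cancel₀ he
      rw [← two_eq]
      linear_combination (-1) * h2 + (2 * M * d * m * e1) * h
  have hMo : ¬ th ∣ M := by
    intro hM
    have : th ∣ e * (d ^ 2 * m ^ 4 - cB * e1 ^ 4) := by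
      rw [h3]; exact (dvd_pow_self th (by norm_num)).mul_right _
    exact PIDaux.coprime_prime hMe prime_th hM ((prime_th.dvd_or_dvd this).resolve_right hO)
  obtain ⟨j, u, hu, huo⟩ := val_ex e he
  obtain ⟨i, w, hw, hwo⟩ := val_ex e1 he1
  have : j = i + 3 := by
    refine val_unique (u := u * (d ^ 2 * m ^ 4 - cB * e1 ^ 4)) (w := w * (M * s))
      (odd_mul huo hO) (odd_mul hwo (odd_mul hMo hs)) ?_
    rw [← mul_assoc, ← hu, h3]
    conv_lhs => rw [hw]
    ring
  subst this
  exact ⟨i, u, w, huo, hwo, hu, hw⟩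

theorem step {M e N : Zt} (hMe : IsCoprime M e) (hM : M ≠ 0) (he : e ≠ 0)
    (hN : N ^ 2 = M ^ 4 + cA * M ^ 2 * e ^ 2 + cB * e ^ 4) :
    ∃ d C m e1 N1 u w : Zt, ∃ i : ℕ, ((d = 1 ∧ C = 27) ∨ (d = -(ep * p3) ∧ C = ⟨-9, -18, -9⟩ ∧ ¬ th ^ 2 ∣ e1)) ∧
      ¬ th ∣ m ∧ IsCoprime m e1 ∧ m ≠ 0 ∧
      N1 ^ 2 = d * m ^ 4 + cA * m ^ 2 * e1 ^ 2 + (th ^ 4 * C) * e1 ^ 4 ∧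
      ¬ th ∣ u ∧ ¬ th ∣ w ∧ e = th ^ (i + 3) * u ∧ e1 = th ^ i * w := by
  obtain ⟨ξ, N', hN', hξ⟩ := S2 hM he hN
  rw [← hN'] at hN
  clear hN' N
  have hξ' : (-ξ) ^ 2 = cA * e ^ 2 + 2 * M ^ 2 + 2 * N' := by rw [← hξ]; ring
  have haa : (M ^ 2 + N' + M * ξ) * (M ^ 2 + N' + M * (-ξ)) = cB * e ^ 4 := by
    linear_combination hN - M ^ 2 * hξ
  have hne : cB * e ^ 4 ≠ 0 := mul_ne_zero (by decide) (pow_ne_zero _ he)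
  have gen : ∀ ξ : Zt, ξ ^ 2 = cA * e ^ 2 + 2 * M ^ 2 + 2 * N' →
      (M ^ 2 + N' + M * ξ) * e ^ 2 * ((M ^ 2 + N' + M * ξ) ^ 2 + cA * (M ^ 2 + N' + M * ξ) * e ^ 2
        + cB * (e ^ 2) ^ 2) = ((M ^ 2 + N' + M * ξ) * e * ξ) ^ 2 := by
    intro ξ hξ
    have haa : (M ^ 2 + N' + M * ξ) * (M ^ 2 + N' - M * ξ) = cB * e ^ 4 := by
      linear_combination hN - M ^ 2 * hξ
    linear_combination (-(M ^ 2 + N' + M * ξ) * e ^ 2) * haa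
      - ((M ^ 2 + N' + M * ξ) ^ 2 * e ^ 2) * hξ
  have hz1 : M ^ 2 + N' + M * ξ ≠ 0 := left_ne_zero_of_mul (by rw [haa]; exact hne)
  have hz2 : M ^ 2 + N' + M * (-ξ) ≠ 0 := right_ne_zero_of_mul (by rw [haa]; exact hne)
  obtain ⟨d, C, m, e1, N1, hP, hcop, hm0, he1, ha, hN1, hc⟩ := S1 hz1 (pow_ne_zero 2 he) (gen ξ hξ)
  obtain ⟨d', C', m', e1', N1', hP', hcop', hm0', he1', ha', hN1', hc'⟩ :=
    S1 hz2 (pow_ne_zero 2 he) (gen (-ξ) hξ')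
  rcases hc with hc | hc
  · rcases hc' with hc' | hc'
    · exfalso
      have h1 : ¬ th ∣ e1 := fun hh => PIDaux.coprime_prime hcop prime_th ((dvd_pow_self th two_ne_zero).trans hc) hh
      have h1' : ¬ th ∣ e1' := fun hh => PIDaux.coprime_prime hcop' prime_th ((dvd_pow_self th two_ne_zero).trans hc') hh
      obtain ⟨k, rfl⟩ := hc
      obtain ⟨k', rfl⟩ := hc'
      apply odd_mul odd27 (odd_mul (odd_pow h1 2) (odd_pow h1' 2))
      refine ⟨th ^ 3 * d * d' * k ^ 2 * k' ^ 2, ?_⟩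
      apply mul_left_cancel₀ (pow_ne_zero 4 th_ne)
      apply mul_left_cancel₀ (pow_ne_zero 4 he)
      rw [cB_eq] at haa
      linear_combination (-(e1 ^ 2 * e1' ^ 2)) * haa + ((M ^ 2 + N' + M * (-ξ)) * e1' ^ 2) * ha
        + (d * (th ^ 2 * k) ^ 2 * e ^ 2) * ha'
    · have hm' : ¬ th ∣ m' := by rcases hc' with h | h <;> exact h.1
      obtain ⟨i, u, w, hu, hw, h1, h2⟩ := stepA hMe he hN hξ' hP' hm0' he1' ha' hN1' hm'
      refine ⟨d', C', m', e1', N1', u, w, i, ?_, hm', hcop', hm0', hN1', hu, hw, h1, h2⟩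
      rcases hc' with h | h
      · exact Or.inl h.2
      · exact Or.inr h.2
  · have hm' : ¬ th ∣ m := by rcases hc with h | h <;> exact h.1
    obtain ⟨i, u, w, hu, hw, h1, h2⟩ := stepA hMe he hN hξ hP hm0 he1 ha hN1 hm'
    refine ⟨d, C, m, e1, N1, u, w, i, ?_, hm', hcop, hm0, hN1, hu, hw, h1, h2⟩
    rcases hc with h | h
    · exact Or.inl h.2
    · exact Or.inr h.2

theorem no_odd {m e N : Zt} (hm : ¬ th ∣ m) (he : ¬ th ∣ e)
    (hN : N ^ 2 = -(ep * p3) * m ^ 4 + cA * m ^ 2 * e ^ 2 + (th ^ 4 * ⟨-9, -18, -9⟩) * e ^ 4) :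
    False := by
  have hA := chordA hN
  set M3 : Zt := 3 * (ep * p3 ^ 2) * ((3 - 4 * th) * m * e + th * N) with hM3
  set e3 : Zt := -(ep * p3) * m ^ 2 * th ^ 2 + 27 * e ^ 2 with he3
  have ho3 : ¬ th ∣ e3 := by
    have : e3 = 27 * e ^ 2 + th * (-(ep * p3) * m ^ 2 * th) := by rw [he3]; ring
    rw [this]
    exact odd_add (odd_mul odd27 (odd_pow he 2)) (Dvd.intro _ rfl)
  have hoM : ¬ th ∣ M3 := by
    rw [hM3]
    refine odd_mul ?_ ?_
    · rw [dvd_th]; decide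
    · rw [mul_assoc]
      refine odd_add (odd_mul ?_ (odd_mul hm he)) (Dvd.intro _ rfl)
      rw [dvd_th]; decide
  have h1 : (-(ep * p3) * m * N) ^ 2 = (-(ep * p3) * m ^ 2) *
      ((-(ep * p3) * m ^ 2) ^ 2 + cA * (-(ep * p3) * m ^ 2) * e ^ 2 + cB * e ^ 4) := by
    have : cB = th ^ 4 * ((-(ep * p3)) * ⟨-9, -18, -9⟩) := by decide
    rw [this]
    linear_combination ((ep * p3) ^ 2 * m ^ 2) * hN
  have hR : (27 * (3 - 4 * th)) ^ 2 = -27 * (729 - 27 * cA * th ^ 2 + cB * th ^ 4) := by decide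
  have hch := chord h1 hR (D := e3) (L := -(ep * p3) * m * N * th ^ 3 - 27 * (3 - 4 * th) * e ^ 3)
    (K := M3 ^ 2 * e ^ 2 * th ^ 2) he3 rfl rfl hA
  have hnz : ∀ {x : Zt}, ¬ th ∣ x → x ≠ 0 := by rintro x hx rfl; exact hx (dvd_zero _)
  obtain ⟨n, hn⟩ := PIDaux.sq_of_sq_mul (c := M3 * e ^ 3 * th ^ 3)
    (F := M3 ^ 4 + cA * M3 ^ 2 * e3 ^ 2 + cB * e3 ^ 4)
    (g := _) (mul_ne_zero (mul_ne_zero (hnz hoM) (pow_ne_zero _ (hnz he))) (pow_ne_zero _ th_ne))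
    (Eq.trans (by ring) hch)
  obtain ⟨g, a', b', ha', hb', hab⟩ := PIDaux.extract M3 e3 (hnz ho3)
  rw [ha', hb'] at hn
  rw [ha'] at hoM
  rw [hb'] at ho3
  have hg : g ≠ 0 := by rintro rfl; simp at ho3
  obtain ⟨k, hk⟩ := PIDaux.sq_of_sq_mul (c := g ^ 2) (F := a' ^ 4 + cA * a' ^ 2 * b' ^ 2 + cB * b' ^ 4)
    (g := n) (pow_ne_zero 2 hg) (by rw [← hn]; ring)
  have ho' : ¬ th ∣ b' := fun h => ho3 (h.mul_left _)
  have hoa : ¬ th ∣ a' := fun h => hoM (h.mul_left _)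
  obtain ⟨d, C, m, e1, N1, u, w, i, -, -, -, -, -, -, -, h, -⟩ := step hab (hnz hoa) (hnz ho') hk.symm
  apply ho'
  rw [h]
  exact (dvd_pow_self th (by omega)).mul_right _

/-- Valuations of the denominators of points on the curve. -/
theorem claimC : ∀ (k : ℕ) (M e N u : Zt), IsCoprime M e → M ≠ 0 → ¬ th ∣ u → e = th ^ k * u →
    N ^ 2 = M ^ 4 + cA * M ^ 2 * e ^ 2 + cB * e ^ 4 → k % 3 = 1 := by
  intro k
  induction k using Nat.strong_induction_on with
  | _ k ih =>
  intro M e N u hMe hM hu he hN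
  have he0 : e ≠ 0 := by
    rw [he]; refine mul_ne_zero (pow_ne_zero _ th_ne) ?_
    rintro rfl; exact hu (dvd_zero _)
  obtain ⟨d, C, m, e1, N1, u', w, i, hc, hm, hme, hm0, hN1, hu', hw, h1, h2⟩ := step hMe hM he0 hN
  have hk : k = i + 3 := val_unique hu hu' (he.symm.trans h1)
  rcases hc with ⟨rfl, rfl⟩ | ⟨rfl, rfl, h3⟩
  · have := ih i (by omega) m e1 N1 w hme hm0 hw h2 (by rw [hN1, cB_eq]; ring)
    omega
  · have hi : i < 2 := by
      by_contra! hi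
      apply h3
      rw [h2]; exact (pow_dvd_pow th hi).mul_right _
    interval_cases i
    · rw [pow_zero, one_mul] at h2
      subst h2
      exact (no_odd hm hw hN1).elim
    · omega

end Zt

namespace Zt
open Cub

theorem odd_sub_odd {x y : Zt} (hx : ¬ th ∣ x) (hy : ¬ th ∣ y) : th ∣ x - y := by
  rw [dvd_th] at *
  rw [sub_a]; omega

theorem val3 {i l : ℕ} {x y w : Zt} (hx : ¬ th ∣ x) (hy : ¬ th ∣ y) (hw : ¬ th ∣ w)
    (h : th ^ i * x - th ^ l * y = th ^ 3 * w) :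
    (i = 3 ∧ 3 < l) ∨ (l = 3 ∧ 3 < i) ∨ (i = l ∧ i < 3) := by
  rcases lt_trichotomy i l with hil | rfl | hil
  · obtain ⟨k, rfl⟩ := Nat.exists_eq_add_of_lt hil
    have : i = 3 := by
      refine val_unique (u := x + th * (-(th ^ k * y))) (odd_add hx (Dvd.intro _ rfl)) hw ?_
      rw [← h]; ring
    omega
  · obtain ⟨z, hz⟩ := odd_sub_odd hx hy
    have := val_le (i := 3) (j := i + 1) (u := w) (w := z) hw (by
      rw [← h]; linear_combination th ^ i * hz)
    omega
  · obtain ⟨k, rfl⟩ := Nat.exists_eq_add_of_lt hil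
    have : l = 3 := by
      refine val_unique (u := -y + th * ((th ^ k * x))) (odd_add (by rwa [dvd_neg]) (Dvd.intro _ rfl)) hw ?_
      rw [← h]; ring
    omega

def cb : Zt := ⟨8, 0, -3⟩
def cc : Zt := ⟨16, 18, -12⟩

theorem core9 {p q q' ν : Zt} {j : ℕ} (hj : 1 ≤ j) (hp : ¬ th ∣ p) (hq' : ¬ th ∣ q')
    (hq : q = th ^ (3 * j) * q')
    (hν : ν ^ 2 = (p ^ 2 - q ^ 2) ^ 2 - cb * (p ^ 2 - q ^ 2) * (p * q) + cc * (p * q) ^ 2) : False := by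
  have hnz : ∀ {x : Zt}, ¬ th ∣ x → x ≠ 0 := by rintro x hx rfl; exact hx (dvd_zero _)
  obtain ⟨j, rfl⟩ := Nat.exists_eq_add_of_le hj
  have hb : cb = th ^ 2 * ⟨-3, 4, 0⟩ := by decide
  have hc : cc = th ^ 4 * ⟨9, -6, 4⟩ := by decide
  have hthq : q = th * (th ^ (2 + 3 * j) * q') := by rw [hq]; ring
  have hW : ¬ th ∣ p ^ 2 - q ^ 2 := by
    have : p ^ 2 - q ^ 2 = p ^ 2 + th * (-(th ^ (2 + 3 * j) * q') * q) := by
      linear_combination (-q) * hthq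
    rw [this]; exact odd_add (odd_pow hp 2) (Dvd.intro _ rfl)
  set W : Zt := p ^ 2 - q ^ 2 with hWdef
  -- the odd part
  set X : Zt := th ^ 2 * ⟨9, -6, 4⟩ * (p * q) - ⟨-3, 4, 0⟩ * W with hX
  have hXo : ¬ th ∣ X := by
    have : X = -(⟨-3, 4, 0⟩ * W) + th * (th * ⟨9, -6, 4⟩ * (p * q)) := by rw [hX]; ring
    rw [this]
    refine odd_add ?_ (Dvd.intro _ rfl)
    rw [dvd_neg]
    exact odd_mul (by rw [dvd_th]; decide) hW
  have hprod : (ν + W) * (ν - W) = th ^ (3 * j + 5) * (p * q' * X) := by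
    have e1 : (ν + W) * (ν - W) = th ^ 2 * (p * q * X) := by
      rw [hX]; rw [hb, hc] at hν; linear_combination hν
    rw [e1]
    conv_lhs => rw [hq]
    ring
  have hne : (ν + W) * (ν - W) ≠ 0 := by
    rw [hprod]
    exact mul_ne_zero (pow_ne_zero _ th_ne) (hnz (odd_mul (odd_mul hp hq') hXo))
  obtain ⟨i, x, hx, hxo⟩ := val_ex _ (left_ne_zero_of_mul hne)
  obtain ⟨l, y, hy, hyo⟩ := val_ex _ (right_ne_zero_of_mul hne)
  have hil : i + l = 3 * j + 5 := by
    refine val_unique (u := x * y) (odd_mul hxo hyo) (odd_mul (odd_mul hp hq') hXo) ?_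
    rw [← hprod, hx, hy]; ring
  have h3 := val3 hxo hyo hW (by rw [← hx, ← hy, ← two_eq]; ring)
  obtain ⟨ν, x, hν, hx, hxo, hj1⟩ : ∃ ν x : Zt, ν ^ 2 = W ^ 2 - cb * W * (p * q) + cc * (p * q) ^ 2 ∧
      ν + W = th ^ 3 * x ∧ ¬ th ∣ x ∧ 1 ≤ j := by
    rcases h3 with ⟨h3, h4⟩ | ⟨h3, h4⟩ | ⟨h3, h4⟩
    · exact ⟨ν, x, hν, by rw [hx, h3], hxo, by omega⟩
    · refine ⟨-ν, -y, by rw [← hν]; ring, ?_, by rwa [dvd_neg], by omega⟩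
      rw [h3] at hy
      linear_combination -hy
    · omega
  clear hprod hne hil h3 hy hyo y
  set a : Zt := 2 * W - cb * (p * q) + 2 * ν with ha
  obtain ⟨j, rfl⟩ := Nat.exists_eq_add_of_le hj1
  set a0 : Zt := x + th * (-(⟨-3, 4, 0⟩ * th ^ (3 * j + 1) * p * q')) with ha0
  have ha0o : ¬ th ∣ a0 := odd_add hxo (Dvd.intro _ rfl)
  have haa : a = th ^ 6 * a0 := by
    have e1 : a = th ^ 3 * (ν + W) - th ^ 2 * ⟨-3, 4, 0⟩ * (p * q) := by
      rw [ha, hb]; linear_combination (W + ν) * two_eq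
    rw [e1, hx, ha0]
    conv_lhs => rw [hq]
    ring
  have hid : p ^ 2 * (a ^ 2 + cA * a * q ^ 2 + cB * q ^ 4) = a * (p ^ 2 + q ^ 2 + ν) ^ 2 := by
    have e1 : cA = 4 + cc := by decide
    have e2 : cB = 4 * cc - cb ^ 2 := by decide
    rw [e1, e2, ha]
    rw [hWdef] at hν ⊢
    linear_combination (-2 * ν - 2 * p ^ 2 + p * q * cb - 2 * q ^ 2) * hν
  have hq0 : q ≠ 0 := by rw [hq]; exact mul_ne_zero (pow_ne_zero _ th_ne) (hnz hq')
  obtain ⟨d, C, m, e, N, hP, hcop, hm0, he0, hae, hN, hcase⟩ := S1 (a := a * p ^ 2) (b := (p * q) ^ 2)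
    (z := a * p ^ 3 * q * (p ^ 2 + q ^ 2 + ν))
    (mul_ne_zero (by rw [haa]; exact mul_ne_zero (pow_ne_zero _ th_ne) (hnz ha0o)) (pow_ne_zero _ (hnz hp)))
    (pow_ne_zero _ (mul_ne_zero (hnz hp) hq0))
    (by linear_combination (a * p ^ 6 * q ^ 2) * hid)
  have hae' : th ^ 6 * (a0 * e ^ 2) = th ^ (6 * j + 12) * (d * m ^ 2 * q' ^ 2) := by
    apply mul_left_cancel₀ (pow_ne_zero 2 (hnz hp))
    rw [haa] at hae
    have : (q : Zt) ^ 2 = th ^ (6 * j + 12) * q' ^ 2 := by rw [hq]; ring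
    linear_combination hae + d * m ^ 2 * p ^ 2 * this
  by_cases hm : th ∣ m
  · have heo : ¬ th ∣ e := fun hh => PIDaux.coprime_prime hcop prime_th hm hh
    have := val_le (odd_mul ha0o (odd_pow heo 2)) hae'
    omega
  · obtain ⟨k, u, hu, huo⟩ := val_ex e he0
    have hk : 6 + 2 * k = 6 * j + 12 := by
      refine val_unique (u := a0 * u ^ 2) (odd_mul ha0o (odd_pow huo 2))
        (odd_mul (odd_mul hP.odd (odd_pow hm 2)) (odd_pow hq' 2)) ?_
      rw [← hae', hu]; ring
    rcases hcase with h | ⟨-, rfl, rfl⟩ | ⟨-, -, -, h⟩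
    · exact hm ((dvd_pow_self th two_ne_zero).trans h)
    · have := claimC k m e N u hcop hm0 huo hu (by rw [hN, cB_eq]; ring)
      omega
    · apply h
      rw [hu]; exact (pow_dvd_pow th (by omega)).mul_right _

theorem sq_unit {F G z : Zt} (h : IsCoprime F G) (hz : F * G = z ^ 2) :
    ∃ s n : Zt, F = s * n ^ 2 ∧ (s = 1 ∨ s = -1 ∨ s = ep ∨ s = -ep) := by
  obtain ⟨n, u, hu⟩ := exists_associated_pow_of_mul_eq_pow' h hz
  obtain ⟨s, w, -, h1, h2⟩ := unit_mod_sq u u.isUnit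
  exact ⟨s, n * w, by rw [← hu, h1]; ring, h2⟩

theorem coprime_of {x y : Zt} (hx : x ≠ 0) (h : ∀ p, Prime p → p ∣ x → p ∣ y → False) : IsCoprime x y := by
  apply isCoprime_of_prime_dvd
  · intro hh; exact hx hh.1
  · intro p hp h1 h2; exact h p hp h1 h2

theorem intCop {x y : ℤ} (h : IsCoprime x y) : IsCoprime (x : Zt) (y : Zt) := by
  simpa using h.map (Int.castRingHom Zt)

/-- Integral points of the last stage. -/
theorem step2 {p q m : ℤ} (hpq : IsCoprime p q) (hp : p % 2 = 1) (hq : q % 2 = 0)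
    (h : (p ^ 2 - q ^ 2 - 4 * (p * q)) ^ 3 - 108 * (p * q) ^ 3 = m ^ 2) : q = 0 := by
  by_contra hq0
  set U : ℤ := p ^ 2 - q ^ 2 - 4 * (p * q) with hU
  obtain ⟨q2, hq2⟩ : ∃ t, q = 2 * t := ⟨q / 2, by omega⟩
  obtain ⟨p2, hp2⟩ : ∃ t, p = 2 * t + 1 := ⟨p / 2, by omega⟩
  have hUo : U % 2 = 1 := by
    have : U = 2 * (2 * p2 ^ 2 + 2 * p2 - 2 * q2 ^ 2 - 2 * p * q) + 1 := by
      rw [hU, hq2, hp2]; ring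
    omega
  have hcopUq : IsCoprime U q := by
    have : IsCoprime (p ^ 2) q := hpq.pow_left
    have h2 := this.add_mul_right_left (-q - 4 * p)
    rwa [show p ^ 2 + (-q - 4 * p) * q = U by rw [hU]; ring] at h2
  have hcopUp : IsCoprime U p := by
    have : IsCoprime (-(q ^ 2)) p := (hpq.symm.pow_left).neg_left
    have h2 := this.add_mul_right_left (p - 4 * q)
    rwa [show -(q ^ 2) + (p - 4 * q) * p = U by rw [hU]; ring] at h2
  have hcopUk : IsCoprime U (p * q) := hcopUp.mul_right hcopUq
  have hU3 : ¬ (3 : ℤ) ∣ U := by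
    intro h3
    have key : ∀ a b : ZMod 3, a ^ 2 - b ^ 2 - 4 * (a * b) = 0 → a = 0 ∧ b = 0 := by decide
    have := key p q (by
      have := (ZMod.intCast_zmod_eq_zero_iff_dvd U 3).2 h3
      rw [hU] at this; push_cast at this; exact this)
    have h1 := (ZMod.intCast_zmod_eq_zero_iff_dvd p 3).1 this.1
    have h2 := (ZMod.intCast_zmod_eq_zero_iff_dvd q 3).1 this.2
    have := hpq.isUnit_of_dvd' h1 h2
    revert this; decide
  set k : ℤ := p * q with hk
  set F : Zt := ⟨U, 0, -3 * k⟩ with hF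
  set G : Zt := (U : Zt) ^ 2 + 3 * th ^ 2 * U * k + 18 * th * k ^ 2 with hG
  have hF' : F = U - 3 * th ^ 2 * k := by
    ext <;> simp [hF, th, sq]
  have hFo : ¬ th ∣ F := by
    rw [dvd_th, hF]; simp only; omega
  have hFne : F ≠ 0 := by rintro h0; rw [h0] at hFo; exact hFo (dvd_zero _)
  have hFG : F * G = (m : Zt) ^ 2 := by
    have : ((m : ℤ) : Zt) ^ 2 = (U : Zt) ^ 3 - 108 * (k : Zt) ^ 3 := by
      have := congrArg (Int.cast : ℤ → Zt) h.symm
      push_cast at this; exact this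
    rw [this, hF', hG]
    linear_combination (-9 * th * U * k ^ 2 - 54 * k ^ 3) * th3
  have hcop : IsCoprime F G := by
    refine coprime_of hFne fun π hπ h1 h2 => ?_
    have h3 : π ∣ 27 * th * (th ^ 3 * (k : Zt) ^ 2) := by
      have : 27 * th * (th ^ 3 * (k : Zt) ^ 2) = G - (U + 2 * 3 * th ^ 2 * k) * F := by
        rw [hF', hG]; linear_combination (9 * th * k ^ 2) * th3
      rw [this]; exact dvd_sub h2 (h1.mul_left _)
    have hth : ¬ π ∣ th := fun hh => hFo (prime_assoc hπ prime_th hh h1)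
    have hU' : ∀ x, π ∣ 3 * th ^ 2 * k * x → π ∣ U * x := by
      intro x hx
      have : U * x = F * x + 3 * th ^ 2 * k * x := by rw [hF']; ring
      rw [this]; exact dvd_add (h1.mul_right _) hx
    rcases hπ.dvd_or_dvd h3 with h4 | h4
    · rcases hπ.dvd_or_dvd h4 with h5 | h5
      · have h6 : π ∣ (3 : Zt) := hπ.dvd_of_dvd_pow (n := 3) (by
          have : (3 : Zt) ^ 3 = 27 := by norm_num
          rwa [this])
        have h7 : π ∣ (U : Zt) := by
          have := hU' 1 (by rw [mul_assoc, mul_assoc]; exact h6.mul_right _)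
          rwa [mul_one] at this
        have h8 : π ∣ p3 := by
          rw [three_eq] at h6
          exact hπ.dvd_of_dvd_pow ((hπ.dvd_or_dvd h6).resolve_left (unit_not_dvd ep_unit hπ))
        have h9 := prime_assoc hπ prime_p3 h8 h7
        rw [dvd_p3] at h9
        simp only [intCast_a, intCast_b, intCast_c] at h9
        apply hU3
        simpa using h9
      · exact hth h5
    · rcases hπ.dvd_or_dvd h4 with h5 | h5
      · exact hth (hπ.dvd_of_dvd_pow h5)
      · have h6 := hπ.dvd_of_dvd_pow h5
        have h7 : π ∣ (U : Zt) := by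
          have := hU' 1 (by rw [mul_one]; exact h6.mul_left _)
          rwa [mul_one] at this
        exact PIDaux.coprime_prime (intCop hcopUk) hπ h7 h6
  have hm0 : m ≠ 0 := by
    rintro rfl
    obtain ⟨t, ht⟩ : ∃ t, U = 2 * t + 1 := ⟨U / 2, by omega⟩
    have : 2 * (4 * t ^ 3 + 6 * t ^ 2 + 3 * t - 54 * k ^ 3) + 1 = 0 := by
      rw [ht] at h; linear_combination h
    omega
  have hnF : 0 < nm F := by
    have : nm F = m ^ 2 := by rw [← h, hF]; simp only [nm]; ring
    rw [this]; positivity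
  have hrF := nm_sign hnF
  obtain ⟨s, n, hs, hsc⟩ := sq_unit hcop hFG
  have hre : re F = re s * re n ^ 2 := by rw [hs, map_mul, map_pow]
  rw [hre] at hrF
  have hn0 : n ≠ 0 := by rintro rfl; rw [hs] at hFne; simp at hFne
  have hs1 : s = 1 := by
    rcases hsc with rfl | rfl | rfl | rfl
    · rfl
    · rw [map_neg, map_one] at hrF; nlinarith [sq_nonneg (re n)]
    · exfalso
      have e1 := congrArg Cub.a hs
      have e2 := congrArg Cub.b hs
      have e1' : U = 2 * (2 * n.a * n.c + n.b ^ 2) - (n.a * n.a + 4 * (n.b * n.c)) := by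
        rw [hF] at e1; simp only [ep, sq, mul_a, mul_b, mul_c] at e1; linear_combination e1
      have e2' : 0 = n.a * n.a + 4 * (n.b * n.c) - 2 * (n.a * n.b + n.c ^ 2) := by
        rw [hF] at e2; simp only [ep, sq, mul_a, mul_b, mul_c] at e2; linear_combination e2
      generalize n.a * n.a = x1 at *
      clear_value U
      omega
    · rw [map_neg] at hrF
      nlinarith [mul_nonneg re_ep.le (sq_nonneg (re n))]
  rw [hs1, one_mul] at hs
  obtain ⟨ν, hν⟩ := PIDaux.sq_of_sq_mul (c := n) (F := G) (g := (m : Zt)) hn0 (by rw [← hs, hFG])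
  -- valuation of q
  obtain ⟨j, q', hqq, hqo⟩ : ∃ j : ℕ, ∃ q' : ℤ, q = 2 ^ j * q' ∧ ¬ 2 ∣ q' := by
    obtain ⟨n, a, h1, h2⟩ := WfDvdMonoid.max_power_factor hq0 Int.prime_two.irreducible
    exact ⟨n, a, h2, h1⟩
  have hj : 1 ≤ j := by
    rcases Nat.eq_zero_or_pos j with rfl | hj
    · rw [pow_zero, one_mul] at hqq; omega
    · exact hj
  refine core9 (p := p) (q := q) (q' := q') (ν := ν) hj ?_ ?_ ?_ ?_
  · rw [dvd_th, intCast_a]; simp only [Int.cast_id]; omega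
  · rw [dvd_th, intCast_a]; simpa using hqo
  · rw [hqq, pow_mul, ← two_eq]; push_cast; ring
  · rw [← hν, hG, hU, hk]
    have e1 : cb = 8 - 3 * th ^ 2 := by decide
    have e2 : cc = 16 + 18 * th - 12 * th ^ 2 := by decide
    rw [e1, e2]; push_cast
    ring

end Zt

namespace Zt
open Cub

theorem dvd_two {π : Zt} (hπ : Prime π) (h : π ∣ 2) {x : Zt} (hx : π ∣ x) : th ∣ x := by
  rw [two_eq] at h
  exact prime_assoc hπ prime_th (hπ.dvd_of_dvd_pow h) hx

theorem dvd_three {π : Zt} (hπ : Prime π) (h : π ∣ 3) {x : Zt} (hx : π ∣ x) : p3 ∣ x := by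
  rw [three_eq] at h
  rcases hπ.dvd_or_dvd h with h | h
  · exact absurd h (unit_not_dvd ep_unit hπ)
  · exact prime_assoc hπ prime_p3 (hπ.dvd_of_dvd_pow h) hx

theorem five_eq : p5 * p25 = 5 * ep ^ 2 := by decide

theorem five_nonsq {m k : ℤ} (hm : m ≠ 0) (h : 5 * m ^ 2 = k ^ 2) : False := by
  have hp : Prime (5 : ℤ) := Int.prime_iff_natAbs_prime.mpr (by norm_num)
  have := PIDaux.odd_prime hp hp.irreducible.squarefree (dvd_refl _) hm (c := 1) (y := k) (by rw [mul_one, h])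
  norm_num at this

/-- The linear factor is `p5` times a square. -/
theorem capL {P T m : ℤ} (hcop : IsCoprime P T) (hP : P % 2 = 1) (hT : ¬ 3 ∣ T)
    (h : 16 * T ^ 3 + 27 * P ^ 3 = 5 * m ^ 2) : ∃ n : Zt, (⟨3 * P, 2 * T, 0⟩ : Zt) = p5 * n ^ 2 := by
  have hm : m ≠ 0 := by
    rintro rfl
    obtain ⟨t, ht⟩ : ∃ t, P = 2 * t + 1 := ⟨P / 2, by omega⟩
    have : 2 * (8 * T ^ 3 + 27 * (4 * t ^ 3 + 6 * t ^ 2 + 3 * t) + 13) + 1 = 0 := by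
      rw [ht] at h; linear_combination h
    omega
  obtain ⟨L, hL⟩ : ∃ L : Zt, L = ⟨3 * P, 2 * T, 0⟩ := ⟨_, rfl⟩
  have hL1 : L = 3 * (P : Zt) + 2 * th * (T : Zt) := by
    rw [hL]; ext <;> simp [th]
  have hnL : nm L = 5 * m ^ 2 := by
    rw [← h, hL]; simp only [nm]; ring
  have hL0 : L ≠ 0 := by
    intro h0; rw [h0, nm_zero] at hnL
    have : 0 < m ^ 2 := by positivity
    omega
  obtain ⟨L', hL'⟩ : ∃ L' : Zt, L' = 9 * (P : Zt) ^ 2 - 6 * th * P * T + 4 * th ^ 2 * T ^ 2 := ⟨_, rfl⟩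
  have hLL : L * L' = 5 * (m : Zt) ^ 2 := by
    have h' : (16 * T ^ 3 + 27 * P ^ 3 : Zt) = 5 * (m : Zt) ^ 2 := by exact_mod_cast congrArg (Int.cast (R := Zt)) h
    rw [hL1, hL', ← h']
    linear_combination 8 * (T : Zt) ^ 3 * th3
  have hthL : ¬ th ∣ L := by rw [dvd_th, hL]; dsimp only; omega
  have hp3L : ¬ p3 ∣ L := by rw [dvd_p3, hL]; dsimp only; omega
  have hcopL : ∀ π, Prime π → π ∣ L → π ∣ L' → False := by
    intro π hπ h1 h2
    have h3 : π ∣ 3 * (2 * (2 * (th ^ 2 * (T : Zt) ^ 2))) := by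
      have := dvd_sub h2 (h1.mul_right (3 * (P : Zt) - 4 * th * T))
      convert this using 1
      rw [hL', hL1]; ring
    have h2' : ¬ π ∣ 2 := fun h => hthL (dvd_two hπ h h1)
    have h3' : ¬ π ∣ 3 := fun h => hp3L (dvd_three hπ h h1)
    have hT' : ¬ π ∣ (T : Zt) := by
      intro hh
      have h4 : π ∣ 3 * (P : Zt) := by
        have := dvd_sub h1 (hh.mul_left (2 * th))
        convert this using 1
        rw [hL1]; ring
      rcases hπ.dvd_or_dvd h4 with h4 | h4
      · exact h3' h4
      · exact PIDaux.coprime_prime (intCop hcop) hπ h4 hh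
    rcases hπ.dvd_or_dvd h3 with h3 | h3
    · exact h3' h3
    rcases hπ.dvd_or_dvd h3 with h3 | h3
    · exact h2' h3
    rcases hπ.dvd_or_dvd h3 with h3 | h3
    · exact h2' h3
    rcases hπ.dvd_or_dvd h3 with h3 | h3
    · exact hthL (prime_assoc hπ prime_th (hπ.dvd_of_dvd_pow h3) h1)
    · exact hT' (hπ.dvd_of_dvd_pow h3)
  have hp25 : ¬ p25 ∣ L := by
    rw [dvd_p25, hL]; dsimp only
    rintro ⟨h1, h2⟩
    have hp : Prime (5 : ℤ) := Int.prime_iff_natAbs_prime.mpr (by norm_num)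
    exact PIDaux.coprime_prime hcop hp (by omega) (by omega)
  obtain ⟨δ, x, hδ, hx⟩ := PIDaux.sqf_decomp L hL0
  have hx0 : x ≠ 0 := by rintro rfl; rw [hx] at hL0; simp at hL0
  have hδ0 : δ ≠ 0 := by rintro rfl; rw [hx] at hL0; simp at hL0
  have key : ∀ π, Prime π → π ∣ δ → π ∣ p5 := by
    intro π hπ h1
    have hL1 : π ∣ L := hx ▸ h1.mul_right _
    have h2 := PIDaux.odd_prime hπ hδ h1 hx0 (c := 5 * L') (y := 5 * (m : Zt)) (by
      rw [← hx]; linear_combination 5 * hLL)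
    rcases hπ.dvd_or_dvd h2 with h2 | h2
    · have h3 : π ∣ p5 * p25 := by rw [five_eq]; exact h2.mul_right _
      rcases hπ.dvd_or_dvd h3 with h3 | h3
      · exact h3
      · exact absurd (prime_assoc hπ prime_p25 h3 hL1) hp25
    · exact absurd h2 (hcopL π hπ hL1)
  rcases PIDaux.peel hδ prime_p5 with h5 | ⟨δ', hδ1, hδ2, hδ3⟩
  · exfalso
    have hu : IsUnit δ := PIDaux.unit_of_no_prime hδ0 (fun π hπ h1 => h5 (prime_assoc hπ prime_p5 (key π hπ h1) h1))
    obtain ⟨u, rfl⟩ := hu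
    have hn : 5 * m ^ 2 = nm (u : Zt) * nm x ^ 2 := by rw [← hnL, hx, nm_mul, sq, nm_mul]; ring
    rcases nm_unit u with h1 | h1
    · exact five_nonsq hm (k := nm x) (by rw [hn, h1, one_mul])
    · rw [h1] at hn
      have : 0 < m ^ 2 := by positivity
      nlinarith [sq_nonneg (nm x)]
  · have hδ'0 : δ' ≠ 0 := by rintro rfl; rw [hδ1] at hδ0; simp at hδ0
    have hu : IsUnit δ' := PIDaux.unit_of_no_prime hδ'0 (fun π hπ h1 =>
      hδ2 (prime_assoc hπ prime_p5 (key π hπ (hδ1 ▸ h1.mul_left _)) h1))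
    obtain ⟨s, w, hw, hs, hsc⟩ := unit_mod_sq δ' hu
    have hLs : L = p5 * s * (w * x) ^ 2 := by rw [hx, hδ1, hs]; ring
    rw [← hL]
    have hn : m ^ 2 = nm s * nm (w * x) ^ 2 := by
      have h1 : nm L = 5 * (nm s * nm (w * x) ^ 2) := by
        rw [hLs, nm_mul, nm_mul, sq (w * x), nm_mul (w * x) (w * x)]
        have : nm p5 = 5 := by decide
        rw [this]; ring
      rw [hnL] at h1; linarith
    have hm2 : 0 < m ^ 2 := by positivity
    rcases hsc with rfl | rfl | rfl | rfl
    · exact ⟨w * x, by rw [hLs, mul_one]⟩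
    · exfalso
      have : nm (-1 : Zt) = -1 := by decide
      rw [this] at hn; nlinarith [sq_nonneg (nm (w * x))]
    · exfalso
      generalize w * x = n at hLs
      have e1 := congrArg Cub.a hLs
      have e2 := congrArg Cub.b hLs
      rw [hL] at e1 e2
      simp only [p5, ep, sq, mul_a, mul_b, mul_c] at e1 e2
      rw [mul_comm n.b n.a, mul_comm n.c n.a, mul_comm n.c n.b] at e1 e2
      generalize n.a * n.a = x1 at *
      generalize n.a * n.b = x2 at *
      generalize n.a * n.c = x3 at *
      generalize n.b * n.b = x4 at *
      generalize n.b * n.c = x5 at *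
      generalize n.c * n.c = x6 at *
      omega
    · exfalso
      have : nm (-ep : Zt) = -1 := by decide
      rw [this] at hn; nlinarith [sq_nonneg (nm (w * x))]

instance : Fact (Nat.Prime 17) := ⟨by norm_num⟩

theorem dec17 : ∀ u n : ZMod 17, 2 * u ^ 2 = 6 * n ^ 2 → u = 0 := by decide

theorem capL17 {a b P T : ℤ} (hP : P = a ^ 2 - b ^ 2) (hT : T = a ^ 2 + a * b - b ^ 2)
    {n : Zt} (hn : (⟨3 * P, 2 * T, 0⟩ : Zt) = p5 * n ^ 2) : 17 ∣ a + 4 * b := by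
  have e := congrArg (evalHom (Int.castRingHom (ZMod 17)) 8 (by decide)) hn
  rw [map_mul, map_pow] at e
  generalize evalHom (Int.castRingHom (ZMod 17)) 8 _ n = k at e
  have e1 : evalHom (Int.castRingHom (ZMod 17)) 8 (by decide) p5 = 6 := by decide
  rw [e1] at e
  change ((3 * P : ℤ) : ZMod 17) + ((2 * T : ℤ) : ZMod 17) * 8 + ((0 : ℤ) : ZMod 17) * 8 ^ 2 = _ at e
  have h17 : (17 : ZMod 17) = 0 := by decide
  have := dec17 ((a : ZMod 17) + 4 * b) k (by
    rw [← e, hP, hT]; push_cast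
    linear_combination (-(a : ZMod 17) ^ 2 + 3 * (b : ZMod 17) ^ 2) * h17)
  have h2 : (((a + 4 * b : ℤ)) : ZMod 17) = 0 := by push_cast; exact this
  exact_mod_cast (ZMod.intCast_zmod_eq_zero_iff_dvd _ 17).1 h2

end Zt

namespace Step1

/-- The factor `x ^ 2 + 1`, homogenised. -/
def al (a b : ℤ) : ℤ := a ^ 2 + b ^ 2
/-- The factor `3 x ^ 2 + 2 x - 3`, homogenised. -/
def ga (a b : ℤ) : ℤ := 3 * a ^ 2 + 2 * (a * b) - 3 * b ^ 2
/-- The sextic factor, homogenised. -/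
def GG (a b : ℤ) : ℤ := 43 * a ^ 6 + 48 * a ^ 5 * b - 81 * a ^ 4 * b ^ 2 - 80 * a ^ 3 * b ^ 3 +
  81 * a ^ 2 * b ^ 4 + 48 * a * b ^ 5 - 43 * b ^ 6

theorem passoc {p q x : ℤ} (hp : Prime p) (hq : Prime q) (h : p ∣ q) (hx : p ∣ x) : q ∣ x :=
  ((hp.associated_of_dvd hq h).dvd_iff_dvd_left).1 hx

theorem prime5 : Prime (5 : ℤ) := Int.prime_iff_natAbs_prime.mpr (by norm_num)
theorem prime17 : Prime (17 : ℤ) := Int.prime_iff_natAbs_prime.mpr (by norm_num)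

theorem zd (n : ℕ) (x : ℤ) : (n : ℤ) ∣ x ↔ (x : ZMod n) = 0 := (ZMod.intCast_zmod_eq_zero_iff_dvd x n).symm

theorem ncop {a b p : ℤ} (h : IsCoprime a b) (hp : Prime p) (ha : p ∣ a) (hb : p ∣ b) : False :=
  PIDaux.coprime_prime h hp ha hb

theorem cv {p x y : ℤ} (h : p ∣ x) (e : y = x) : p ∣ y := by rw [e]; exact h

theorem al_b {a b p : ℤ} (h : IsCoprime a b) (hp : Prime p) (h1 : p ∣ al a b) (h2 : p ∣ b) : False := by
  refine ncop h hp (hp.dvd_of_dvd_pow (n := 2) ?_) h2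
  have := dvd_sub h1 (h2.mul_right b)
  exact cv this (by simp only [al]; ring)

theorem al_ga {a b p : ℤ} (h : IsCoprime a b) (hp : Prime p) (h1 : p ∣ al a b) (h2 : p ∣ ga a b) :
    p ∣ 2 ∨ p ∣ 5 := by
  have h3 : p ∣ 2 * (2 * (5 * b ^ 3)) := by
    have := dvd_sub (h1.mul_right (2 * b)) ((dvd_sub h2 (h1.mul_left 3)).mul_right (a + 3 * b))
    exact cv this (by simp only [al, ga]; ring)
  rcases hp.dvd_or_dvd h3 with h3 | h3
  · exact Or.inl h3
  rcases hp.dvd_or_dvd h3 with h3 | h3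
  · exact Or.inl h3
  rcases hp.dvd_or_dvd h3 with h3 | h3
  · exact Or.inr h3
  · exact (al_b h hp h1 (hp.dvd_of_dvd_pow h3)).elim

theorem al_GG {a b p : ℤ} (h : IsCoprime a b) (hp : Prime p) (h1 : p ∣ al a b) (h2 : p ∣ GG a b) :
    p ∣ 2 ∨ p ∣ 5 ∨ p ∣ 17 := by
  have h3 : p ∣ 2 ^ 3 * (5 * (17 ^ 2 * b ^ 7)) := by
    have h4 := dvd_sub h2 (h1.mul_right (43 * a ^ 4 + 48 * a ^ 3 * b - 124 * a ^ 2 * b ^ 2 - 128 * a * b ^ 3 + 205 * b ^ 4))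
    have := dvd_sub (h1.mul_right (8 * 484 * b ^ 5)) (h4.mul_right (22 * a + 31 * b))
    exact cv this (by simp only [al, GG]; ring)
  rcases hp.dvd_or_dvd h3 with h3 | h3
  · exact Or.inl (hp.dvd_of_dvd_pow h3)
  rcases hp.dvd_or_dvd h3 with h3 | h3
  · exact Or.inr (Or.inl h3)
  rcases hp.dvd_or_dvd h3 with h3 | h3
  · exact Or.inr (Or.inr (hp.dvd_of_dvd_pow h3))
  · exact (al_b h hp h1 (hp.dvd_of_dvd_pow h3)).elim

theorem PQ {a b p : ℤ} (h : IsCoprime a b) (hp : Prime p) (h1 : p ∣ a ^ 2 - b ^ 2) (h2 : p ∣ a * b) : False := by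
  rcases hp.dvd_or_dvd h2 with h3 | h3
  · refine ncop h hp h3 (hp.dvd_of_dvd_pow (n := 2) ?_)
    have := dvd_sub (h3.mul_right a) h1
    exact cv this (by ring)
  · refine ncop h hp (hp.dvd_of_dvd_pow (n := 2) ?_) h3
    have := dvd_add (h3.mul_right b) h1
    exact cv this (by ring)

theorem ga_GG {a b p : ℤ} (h : IsCoprime a b) (hp : Prime p) (h1 : p ∣ ga a b) (h2 : p ∣ GG a b) :
    p ∣ 2 ∨ p ∣ 5 := by
  have h3 : p ∣ 5 ^ 2 * (a ^ 2 - b ^ 2) ^ 3 := by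
    have := dvd_sub h2 (h1.mul_right (2 * (ga a b ^ 2 - 3 * ga a b * (a ^ 2 - b ^ 2) + 3 * (a ^ 2 - b ^ 2) ^ 2)))
    exact cv this (by simp only [ga, GG]; ring)
  rcases hp.dvd_or_dvd h3 with h3 | h3
  · exact Or.inr (hp.dvd_of_dvd_pow h3)
  have h3 := hp.dvd_of_dvd_pow h3
  have h4 : p ∣ 2 * (a * b) := by
    have := dvd_sub h1 (h3.mul_left 3)
    exact cv this (by simp only [ga]; ring)
  rcases hp.dvd_or_dvd h4 with h4 | h4
  · exact Or.inl h4
  · exact (PQ h hp h3 h4).elim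

theorem coprime_of {x y : ℤ} (hx : x ≠ 0) (h : ∀ p, Prime p → p ∣ x → p ∣ y → False) : IsCoprime x y :=
  isCoprime_of_prime_dvd (fun hh => hx hh.1) (fun p hp h1 h2 => h p hp h1 h2)

theorem gaSq {γ c Y : ℤ} (h0 : γ ≠ 0) (h25 : ¬ 25 ∣ γ) (hpr : ∀ p, Prime p → p ∣ γ → p ∣ c → p ∣ 5)
    (h : γ * c = Y ^ 2) : (∃ r, γ = r ^ 2 ∨ γ = - r ^ 2) ∨ (∃ r, γ = 5 * r ^ 2 ∨ γ = -(5 * r ^ 2)) := by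
  by_cases h5 : 5 ∣ γ
  · right
    obtain ⟨γ1, rfl⟩ := h5
    have hn : ¬ 5 ∣ γ1 := by omega
    have hcop : IsCoprime γ1 (5 * c) := by
      refine coprime_of (by rintro rfl; simp at h0) (fun p hp h1 h2 => ?_)
      have : p ∣ 5 := by
        rcases hp.dvd_or_dvd h2 with h2 | h2
        · exact h2
        · exact hpr p hp (h1.mul_left 5) h2
      exact hn (passoc hp prime5 this h1)
    obtain ⟨r, hr⟩ := Int.sq_of_isCoprime hcop (c := Y) (by rw [← h]; ring)
    exact ⟨r, hr.imp (fun h => by rw [h]) (fun h => by rw [h]; ring)⟩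
  · left
    refine Int.sq_of_isCoprime (coprime_of h0 (fun p hp h1 h2 => ?_)) h
    exact h5 (passoc hp prime5 (hpr p hp h1 h2) h1)

theorem pos_sq {α G z : ℤ} (hα : 0 < α) (hG : G ≠ 0) (hcop : IsCoprime G α) (h : α * G = z ^ 2) :
    ∃ m, G = m ^ 2 := by
  obtain ⟨m, hm | hm⟩ := Int.sq_of_isCoprime hcop (c := z) (by rw [← h]; ring)
  · exact ⟨m, hm⟩
  · exfalso
    have : m ≠ 0 := by rintro rfl; simp at hm; exact hG hm
    have : 0 < m ^ 2 := by positivity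
    rw [hm] at h
    nlinarith [sq_nonneg z, mul_pos hα this]

/-! Congruence facts. -/

theorem d2 : ∀ a b : ZMod 2, a + b ≠ 0 → a ^ 2 + b ^ 2 ≠ 0 ∧ 3 * a ^ 2 + 2 * (a * b) - 3 * b ^ 2 ≠ 0 ∧
    a ^ 2 - b ^ 2 ≠ 0 ∧
    43 * a ^ 6 + 48 * a ^ 5 * b - 81 * a ^ 4 * b ^ 2 - 80 * a ^ 3 * b ^ 3 +
      81 * a ^ 2 * b ^ 4 + 48 * a * b ^ 5 - 43 * b ^ 6 ≠ 0 := by decide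

theorem odd_all {a b : ℤ} (h : ¬ 2 ∣ a + b) : ¬ 2 ∣ al a b ∧ ¬ 2 ∣ ga a b ∧ ¬ 2 ∣ a ^ 2 - b ^ 2 ∧ ¬ 2 ∣ GG a b := by
  have := d2 a b (by rw [← Int.cast_add]; exact fun hh => h ((zd 2 _).2 hh))
  refine ⟨fun hh => this.1 ?_, fun hh => this.2.1 ?_, fun hh => this.2.2.1 ?_, fun hh => this.2.2.2 ?_⟩
  all_goals
    have hh := (zd 2 _).1 hh
    try simp only [al, ga, GG] at hh
    push_cast at hh
    exact hh

theorem d3 : ∀ a b : ZMod 3, a ^ 2 + a * b - b ^ 2 = 0 → a = 0 ∧ b = 0 := by decide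

theorem d5 : ∀ a b : ZMod 5, 3 * a ^ 2 + 2 * (a * b) - 3 * b ^ 2 = 0 → 
    43 * a ^ 6 + 48 * a ^ 5 * b - 81 * a ^ 4 * b ^ 2 - 80 * a ^ 3 * b ^ 3 +
      81 * a ^ 2 * b ^ 4 + 48 * a * b ^ 5 - 43 * b ^ 6 = 0 := by decide

theorem d5' : ∀ a b : ZMod 5, a ^ 2 + b ^ 2 = 0 → 
    43 * a ^ 6 + 48 * a ^ 5 * b - 81 * a ^ 4 * b ^ 2 - 80 * a ^ 3 * b ^ 3 +
      81 * a ^ 2 * b ^ 4 + 48 * a * b ^ 5 - 43 * b ^ 6 = 0 → 3 * a ^ 2 + 2 * (a * b) - 3 * b ^ 2 = 0 := by decide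

set_option maxRecDepth 4000 in
theorem d17 : ∀ a b : ZMod 17, a ^ 2 + b ^ 2 = 0 → 
    43 * a ^ 6 + 48 * a ^ 5 * b - 81 * a ^ 4 * b ^ 2 - 80 * a ^ 3 * b ^ 3 +
      81 * a ^ 2 * b ^ 4 + 48 * a * b ^ 5 - 43 * b ^ 6 = 0 → a + 4 * b = 0 := by decide

set_option maxRecDepth 10000 in
theorem d25 : ∀ a b : ZMod 25, 3 * a ^ 2 + 2 * (a * b) - 3 * b ^ 2 = 0 → 5 * a = 0 ∧ 5 * b = 0 := by decide

set_option maxRecDepth 10000 in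
theorem d25G : ∀ a b : ZMod 25, 5 * (3 * a ^ 2 + 2 * (a * b) - 3 * b ^ 2) = 0 → 
    43 * a ^ 6 + 48 * a ^ 5 * b - 81 * a ^ 4 * b ^ 2 - 80 * a ^ 3 * b ^ 3 +
      81 * a ^ 2 * b ^ 4 + 48 * a * b ^ 5 - 43 * b ^ 6 = 0 → 5 * a = 0 ∧ 5 * b = 0 := by decide

set_option maxRecDepth 10000 in
theorem d8 : ∀ a b r : ZMod 8, 3 * a ^ 2 + 2 * (a * b) - 3 * b ^ 2 = r ^ 2 ∨
    3 * a ^ 2 + 2 * (a * b) - 3 * b ^ 2 = - r ^ 2 → 4 * (a + b) = 0 := by decide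

set_option maxRecDepth 10000 in
theorem d8' : ∀ p q r : ZMod 8, p ^ 2 - 6 * (p * q) - q ^ 2 = 5 * r ^ 2 ∨
    p ^ 2 - 6 * (p * q) - q ^ 2 = -(5 * r ^ 2) → 4 * (p + q) = 0 := by decide

set_option maxRecDepth 10000 in
theorem d8'' : ∀ p q r : ZMod 8, p ^ 2 - 6 * (p * q) - q ^ 2 = r ^ 2 → 4 * (p + q) ≠ 0 → 4 * q = 0 := by decide

/-- The sextic at `a = 17 t - 4 b`, divided by 289. -/
theorem GG17 (t b : ℤ) : GG (17 * t - 4 * b) b = 289 * (3591403 * t ^ 6 - 4834392 * t ^ 5 * b + 2681631 * t ^ 4 * b ^ 2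
    - 784448 * t ^ 3 * b ^ 3 + 127665 * t ^ 2 * b ^ 4 - 10968 * t * b ^ 5 + 389 * b ^ 6) := by
  rw [GG]; ring

set_option maxRecDepth 10000 in
theorem d17g : ∀ t b : ZMod 17, 12 * t ^ 2 * b ^ 4 - 3 * t * b ^ 5 - 2 * b ^ 6 = 0 → b = 0 := by decide

set_option maxRecDepth 10000 in
theorem d17h : ∀ t b : ZMod 17, b ^ 2 - 8 * t * b = 0 → 12 * t ^ 2 * b ^ 4 - 3 * t * b ^ 5 - 2 * b ^ 6 = b ^ 6 := by
  decide

theorem d17i : ∀ b m : ZMod 17, b ^ 6 = 5 * m ^ 2 → b = 0 := by decide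

theorem d17j : ∀ b r : ZMod 17, 3 * b ^ 2 = 2 * r ^ 2 → b = 0 := by decide

end Step1

namespace Step1

theorem ga25 {a b : ℤ} (h : IsCoprime a b) : ¬ 25 ∣ ga a b := by
  intro hh
  have hh := (zd 25 _).1 hh
  simp only [ga] at hh
  push_cast at hh
  obtain ⟨h1, h2⟩ := d25 a b hh
  have h1 : ((25 : ℕ) : ℤ) ∣ 5 * a := (zd 25 _).2 (by push_cast; exact h1)
  have h2 : ((25 : ℕ) : ℤ) ∣ 5 * b := (zd 25 _).2 (by push_cast; exact h2)
  push_cast at h1 h2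
  exact ncop h prime5 (by omega) (by omega)

theorem GG25 {a b : ℤ} (h : IsCoprime a b) (h5 : 5 ∣ ga a b) : ¬ 25 ∣ GG a b := by
  intro hh
  have hh := (zd 25 _).1 hh
  simp only [GG] at hh
  push_cast at hh
  have h5 : ((25 : ℕ) : ℤ) ∣ 5 * ga a b := by push_cast; omega
  have h5 := (zd 25 _).1 h5
  simp only [ga] at h5
  push_cast at h5
  obtain ⟨h1, h2⟩ := d25G a b h5 hh
  have h1 : ((25 : ℕ) : ℤ) ∣ 5 * a := (zd 25 _).2 (by push_cast; exact h1)
  have h2 : ((25 : ℕ) : ℤ) ∣ 5 * b := (zd 25 _).2 (by push_cast; exact h2)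
  push_cast at h1 h2
  exact ncop h prime5 (by omega) (by omega)

theorem GG5 {a b : ℤ} (h5 : 5 ∣ ga a b) : 5 ∣ GG a b := by
  have h5 := (zd 5 _).1 h5
  refine (zd 5 _).2 ?_
  simp only [ga, GG] at h5 ⊢
  push_cast at h5 ⊢
  exact d5 a b h5

theorem ga5 {a b : ℤ} (h5 : 5 ∣ al a b) (h5' : 5 ∣ GG a b) : 5 ∣ ga a b := by
  have h5 := (zd 5 _).1 h5
  have h5' := (zd 5 _).1 h5'
  refine (zd 5 _).2 ?_
  simp only [al, ga, GG] at h5 h5' ⊢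
  push_cast at h5 h5' ⊢
  exact d5' a b h5 h5'

theorem al17 {a b : ℤ} (h5 : 17 ∣ al a b) (h5' : 17 ∣ GG a b) : 17 ∣ a + 4 * b := by
  have h5 := (zd 17 _).1 h5
  have h5' := (zd 17 _).1 h5'
  refine (zd 17 _).2 ?_
  simp only [al, GG] at h5 h5' ⊢
  push_cast at h5 h5' ⊢
  exact d17 a b h5 h5'

theorem ga17 {a b r : ℤ} (h : 17 ∣ a + 4 * b) (hr : ga a b = 2 * r ^ 2) : 17 ∣ b := by
  obtain ⟨t, ht⟩ := h
  obtain rfl : a = 17 * t - 4 * b := by omega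
  have h1 : 3 * b ^ 2 - 2 * r ^ 2 = 17 * (-(51 * t ^ 2 - 22 * t * b + 2 * b ^ 2)) := by
    rw [ga] at hr; linear_combination hr
  have h2 : ((3 * b ^ 2 - 2 * r ^ 2 : ℤ) : ZMod 17) = 0 := (zd 17 _).1 ⟨_, h1⟩
  push_cast at h2
  exact (zd 17 _).2 (d17j _ _ (sub_eq_zero.1 h2))

theorem al_pos {a b : ℤ} (h : IsCoprime a b) : 0 < al a b := by
  rw [al]
  by_cases hb : b = 0
  · have ha : a ≠ 0 := by
      rintro rfl
      subst hb
      exact ncop h prime5 (dvd_zero _) (dvd_zero _)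
    positivity
  · positivity

theorem caseI_pos {a b r Y : ℤ} (h : IsCoprime a b) (hodd : ¬ 2 ∣ a + b) (hr : ga a b = 5 * r ^ 2)
    (hY : al a b * ga a b * GG a b = Y ^ 2) : False := by
  obtain ⟨oal, oga, oP, oG⟩ := odd_all hodd
  have h5 : 5 ∣ ga a b := ⟨_, hr⟩
  obtain ⟨G1, hG1⟩ := GG5 h5
  have hG25 := GG25 h h5
  have hr0 : r ≠ 0 := by rintro rfl; rw [hr] at oga; simp at oga
  have hG10 : G1 ≠ 0 := by rintro rfl; rw [hG1] at oG; simp at oG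
  obtain ⟨z, hz⟩ := PIDaux.sq_of_sq_mul (c := 5 * r) (F := al a b * G1) (g := Y) (by simpa using hr0)
    (by rw [← hY, hr, hG1]; ring)
  have hαpos := al_pos h
  have hG1G : ∀ p, p ∣ G1 → p ∣ GG a b := fun p hp => hG1 ▸ hp.mul_left 5
  have hpr : ∀ p, Prime p → p ∣ G1 → p ∣ al a b → p ∣ 17 := by
    intro p hp h1 h2
    rcases al_GG h hp h2 (hG1G p h1) with h3 | h3 | h3
    · exact absurd (passoc hp Int.prime_two h3 h2) oal
    · have := passoc hp prime5 h3 h1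
      omega
    · exact h3
  by_cases h17 : 17 ∣ a + 4 * b
  · obtain ⟨t, ht⟩ := h17
    obtain rfl : a = 17 * t - 4 * b := by omega
    have h17b : ¬ 17 ∣ b := fun hb => ncop h prime17 (by omega) hb
    have hb0 : ((b : ℤ) : ZMod 17) ≠ 0 := fun hb => h17b ((zd 17 _).2 hb)
    have hg := GG17 t b
    obtain ⟨g, hgd⟩ : ∃ g, g = 3591403 * t ^ 6 - 4834392 * t ^ 5 * b + 2681631 * t ^ 4 * b ^ 2
      - 784448 * t ^ 3 * b ^ 3 + 127665 * t ^ 2 * b ^ 4 - 10968 * t * b ^ 5 + 389 * b ^ 6 := ⟨_, rfl⟩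
    rw [← hgd] at hg
    have hgz : ((g : ℤ) : ZMod 17) = 12 * (t : ZMod 17) ^ 2 * (b : ZMod 17) ^ 4 - 3 * t * (b : ZMod 17) ^ 5 - 2 * (b : ZMod 17) ^ 6 := by
      rw [hgd]; push_cast
      have h17 : (17 : ZMod 17) = 0 := by decide
      linear_combination (211259 * (t : ZMod 17) ^ 6 - 284376 * (t : ZMod 17) ^ 5 * b + 157743 * (t : ZMod 17) ^ 4 * (b : ZMod 17) ^ 2
      - 46144 * (t : ZMod 17) ^ 3 * (b : ZMod 17) ^ 3 + 7509 * (t : ZMod 17) ^ 2 * (b : ZMod 17) ^ 4 - 645 * t * (b : ZMod 17) ^ 5 + 23 * (b : ZMod 17) ^ 6) * h17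
    have hg17 : ¬ 17 ∣ g := fun hh => hb0 (d17g _ _ (hgz.symm.trans ((zd 17 _).1 hh)))
    obtain ⟨g1, rfl⟩ : 5 ∣ g := by omega
    obtain rfl : G1 = 289 * g1 := by omega
    obtain ⟨z', hz'⟩ := PIDaux.sq_of_sq_mul (c := (17 : ℤ)) (F := al (17 * t - 4 * b) b * g1) (g := z) (by norm_num)
      (by rw [← hz]; ring)
    have hg10 : g1 ≠ 0 := by rintro rfl; simp at hG10
    have hcop : IsCoprime g1 (al (17 * t - 4 * b) b) := by
      refine coprime_of hg10 (fun p hp h1 h2 => ?_)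
      have := passoc hp prime17 (hpr p hp (h1.mul_left _) h2) h1
      exact hg17 (this.mul_left 5)
    obtain ⟨m, rfl⟩ := pos_sq hαpos hg10 hcop hz'
    have hm0 : m ≠ 0 := by rintro rfl; simp at hg10
    obtain ⟨n, hn⟩ := PIDaux.sq_of_sq_mul (c := m) (F := al (17 * t - 4 * b) b) (g := z') hm0 (by rw [← hz']; ring)
    have hα : al (17 * t - 4 * b) b = 17 * (b ^ 2 - 8 * t * b + 17 * t ^ 2) := by rw [al]; ring
    have hn17 : 17 ∣ n := prime17.dvd_of_dvd_pow (n := 2) (hn ▸ ⟨_, hα⟩)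
    obtain ⟨n', rfl⟩ := hn17
    have h3 : b ^ 2 - 8 * t * b = 17 * (n' ^ 2 - t ^ 2) := by
      have : 17 * (b ^ 2 - 8 * t * b + 17 * t ^ 2) = 17 * (17 * n' ^ 2) := by rw [← hα, hn]; ring
      linarith
    have h4 : ((b ^ 2 - 8 * t * b : ℤ) : ZMod 17) = 0 := (zd 17 _).1 ⟨_, h3⟩
    push_cast at h4
    have h5 := d17h _ _ h4
    rw [← hgz] at h5
    push_cast at h5
    exact hb0 (d17i _ _ h5.symm)
  · have hcop : IsCoprime G1 (al a b) := by
      refine coprime_of hG10 (fun p hp h1 h2 => h17 ?_)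
      have h3 := hpr p hp h1 h2
      exact al17 (passoc hp prime17 h3 h2) (hG1G _ (passoc hp prime17 h3 h1))
    obtain ⟨m, rfl⟩ := pos_sq hαpos hG10 hcop hz
    have hPT : IsCoprime (a ^ 2 - b ^ 2) (a ^ 2 + a * b - b ^ 2) := by
      refine coprime_of (fun h0 => oP (h0 ▸ dvd_zero _)) (fun p hp h1 h2 => PQ h hp h1 ?_)
      exact cv (dvd_sub h2 h1) (by ring)
    obtain ⟨n, hn⟩ := Zt.capL (P := a ^ 2 - b ^ 2) (T := a ^ 2 + a * b - b ^ 2) (m := m) hPT (by omega) (by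
      intro hh
      have hh := (zd 3 _).1 hh
      push_cast at hh
      obtain ⟨h1, h2⟩ := d3 a b hh
      exact ncop h Int.prime_three ((zd 3 _).2 h1) ((zd 3 _).2 h2)) (by
      rw [← hG1, GG]; ring)
    exact h17 (Zt.capL17 rfl rfl hn)

theorem symm_al (a b : ℤ) : al (-b) a = al a b := by simp only [al]; ring
theorem symm_ga (a b : ℤ) : ga (-b) a = - ga a b := by simp only [ga]; ring
theorem symm_GG (a b : ℤ) : GG (-b) a = - GG a b := by simp only [GG]; ring

theorem caseI {a b Y : ℤ} (h : IsCoprime a b) (hodd : ¬ 2 ∣ a + b)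
    (hY : al a b * ga a b * GG a b = Y ^ 2) : False := by
  obtain ⟨oal, oga, oP, oG⟩ := odd_all hodd
  have hpr : ∀ p, Prime p → p ∣ ga a b → p ∣ al a b * GG a b → p ∣ 5 := by
    intro p hp h1 h2
    have : p ∣ 2 ∨ p ∣ 5 := by
      rcases hp.dvd_or_dvd h2 with h2 | h2
      · exact al_ga h hp h2 h1
      · exact ga_GG h hp h1 h2
    exact this.resolve_left (fun h3 => oga (passoc hp Int.prime_two h3 h1))
  rcases gaSq (γ := ga a b) (c := al a b * GG a b) (Y := Y) (fun h0 => oga (h0 ▸ dvd_zero _)) (ga25 h) hpr (by rw [← hY]; ring)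
    with ⟨r, hr⟩ | ⟨r, hr | hr⟩
  · have h4 := d8 a b r (by
      rcases hr with hr | hr
      · left
        have := congrArg (Int.cast (R := ZMod 8)) hr
        simp only [ga] at this
        push_cast at this
        exact this
      · right
        have := congrArg (Int.cast (R := ZMod 8)) hr
        simp only [ga] at this
        push_cast at this
        exact this)
    have h5 : ((8 : ℕ) : ℤ) ∣ 4 * (a + b) := (zd 8 _).2 (by push_cast; exact h4)
    push_cast at h5
    omega
  · exact caseI_pos h hodd hr hY
  · refine caseI_pos (a := -b) (b := a) (r := r) (Y := Y) h.symm.neg_left (by omega) ?_ ?_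
    · rw [symm_ga, hr]; ring
    · rw [symm_al, symm_ga, symm_GG, ← hY]; ring

/-- The reduced factors in the case of odd `a, b`. -/
def al' (p q : ℤ) : ℤ := p ^ 2 + q ^ 2
/-- The second one. -/
def ga' (p q : ℤ) : ℤ := p ^ 2 - 6 * (p * q) - q ^ 2
/-- The third one. -/
def GG' (p q : ℤ) : ℤ := (p ^ 2 - q ^ 2 - 4 * (p * q)) ^ 3 - 108 * (p * q) ^ 3

theorem al_eq (p q : ℤ) : al (p - q) (p + q) = 2 * al' p q := by rw [al, al']; ring
theorem ga_eq (p q : ℤ) : ga (p - q) (p + q) = 2 * ga' p q := by rw [ga, ga']; ring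
theorem GG_eq (p q : ℤ) : GG (p - q) (p + q) = 16 * GG' p q := by rw [GG, GG']; ring

theorem d2' : ∀ p q : ZMod 2, p + q ≠ 0 → p ^ 2 + q ^ 2 ≠ 0 ∧ p ^ 2 - 6 * (p * q) - q ^ 2 ≠ 0 ∧
    (p ^ 2 - q ^ 2 - 4 * (p * q)) ^ 3 - 108 * (p * q) ^ 3 ≠ 0 := by decide

theorem odd_all' {p q : ℤ} (h : ¬ 2 ∣ p + q) : ¬ 2 ∣ al' p q ∧ ¬ 2 ∣ ga' p q ∧ ¬ 2 ∣ GG' p q := by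
  have := d2' p q (by rw [← Int.cast_add]; exact fun hh => h ((zd 2 _).2 hh))
  refine ⟨fun hh => this.1 ?_, fun hh => this.2.1 ?_, fun hh => this.2.2 ?_⟩
  all_goals
    have hh := (zd 2 _).1 hh
    simp only [al', ga', GG'] at hh
    push_cast at hh
    exact hh

theorem cop_of {p q : ℤ} (h : IsCoprime (p - q) (p + q)) : IsCoprime p q := by
  obtain ⟨u, v, e⟩ := h
  exact ⟨u + v, v - u, by linear_combination e⟩

theorem caseII_pos {p q r Y : ℤ} (h : IsCoprime (p - q) (p + q)) (hodd : ¬ 2 ∣ p + q) (hr : ga' p q = r ^ 2)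
    (hY : al' p q * ga' p q * GG' p q = Y ^ 2) : q = 0 := by
  obtain ⟨oal, oga, oG⟩ := odd_all' hodd
  have hpq := cop_of h
  have hr0 : r ≠ 0 := by rintro rfl; rw [hr] at oga; simp at oga
  have hG0 : GG' p q ≠ 0 := fun h0 => oG (h0 ▸ dvd_zero _)
  obtain ⟨z, hz⟩ := PIDaux.sq_of_sq_mul (c := r) (F := al' p q * GG' p q) (g := Y) hr0
    (by rw [← hY, hr]; ring)
  have hαpos : 0 < al' p q := by have := al_pos h; rw [al_eq] at this; omega
  have hcop : IsCoprime (GG' p q) (al' p q) := by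
    refine coprime_of hG0 (fun l hl h1 h2 => ?_)
    have h1' : ∀ l, l ∣ GG' p q → l ∣ GG (p - q) (p + q) := fun l h1 => GG_eq p q ▸ h1.mul_left _
    have h2' : ∀ l, l ∣ al' p q → l ∣ al (p - q) (p + q) := fun l h1 => al_eq p q ▸ h1.mul_left _
    rcases al_GG h hl (h2' _ h2) (h1' _ h1) with h3 | h3 | h3
    · exact oG (passoc hl Int.prime_two h3 h1)
    · have h4 := ga5 (h2' _ (passoc hl prime5 h3 h2)) (h1' _ (passoc hl prime5 h3 h1))
      have h5 := ga25 h
      rw [ga_eq, hr] at h4 h5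
      have h6 : 5 ∣ r := prime5.dvd_of_dvd_pow (n := 2) (by omega)
      obtain ⟨s, rfl⟩ := h6
      exact h5 ⟨2 * s ^ 2, by ring⟩
    · have h4 := al17 (h2' _ (passoc hl prime17 h3 h2)) (h1' _ (passoc hl prime17 h3 h1))
      have h5 := ga17 h4 (by rw [ga_eq, hr])
      exact ncop h prime17 (by omega) h5
  obtain ⟨m, hm⟩ := pos_sq hαpos hG0 hcop hz
  have h8 : 4 * ((q : ℤ) : ZMod 8) = 0 := d8'' p q r (by
      have := congrArg (Int.cast (R := ZMod 8)) hr
      simp only [ga'] at this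
      push_cast at this
      exact this) (by
      intro h4
      have h5 : ((8 : ℕ) : ℤ) ∣ 4 * (p + q) := (zd 8 _).2 (by push_cast; exact h4)
      push_cast at h5
      omega)
  have h9 : ((8 : ℕ) : ℤ) ∣ 4 * q := (zd 8 _).2 (by push_cast; exact h8)
  push_cast at h9
  exact Zt.step2 hpq (m := m) (by omega) (by omega) hm

theorem symm_al' (a b : ℤ) : al' (-b) a = al' a b := by simp only [al']; ring
theorem symm_ga' (a b : ℤ) : ga' (-b) a = - ga' a b := by simp only [ga']; ring
theorem symm_GG' (a b : ℤ) : GG' (-b) a = - GG' a b := by simp only [GG']; ring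

theorem caseII {p q Y : ℤ} (h : IsCoprime (p - q) (p + q)) (hodd : ¬ 2 ∣ p + q)
    (hY : al' p q * ga' p q * GG' p q = Y ^ 2) : q = 0 ∨ p = 0 := by
  obtain ⟨oal, oga, oG⟩ := odd_all' hodd
  have hpr : ∀ l, Prime l → l ∣ ga' p q → l ∣ al' p q * GG' p q → l ∣ 5 := by
    intro l hp h1 h2
    have h1' : l ∣ ga (p - q) (p + q) := ga_eq p q ▸ h1.mul_left _
    have : l ∣ 2 ∨ l ∣ 5 := by
      rcases hp.dvd_or_dvd h2 with h2 | h2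
      · exact al_ga h hp (al_eq p q ▸ h2.mul_left _) h1'
      · exact ga_GG h hp h1' (GG_eq p q ▸ h2.mul_left _)
    exact this.resolve_left (fun h3 => oga (passoc hp Int.prime_two h3 h1))
  have h25 : ¬ 25 ∣ ga' p q := fun hh => ga25 h (ga_eq p q ▸ hh.mul_left _)
  rcases gaSq (γ := ga' p q) (c := al' p q * GG' p q) (Y := Y) (fun h0 => oga (h0 ▸ dvd_zero _)) h25 hpr (by rw [← hY]; ring)
    with ⟨r, hr | hr⟩ | ⟨r, hr⟩
  · exact Or.inl (caseII_pos h hodd hr hY)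
  · right
    refine caseII_pos (p := -q) (q := p) (r := r) (Y := Y) ?_ (by omega) ?_ ?_
    · have e1 : -q - p = -(p + q) := by ring
      have e2 : -q + p = p - q := by ring
      rw [e1, e2]; exact h.symm.neg_left
    · rw [symm_ga', hr]; ring
    · rw [symm_al', symm_ga', symm_GG', ← hY]; ring
  · exfalso
    have h4 := d8' p q r (by
      rcases hr with hr | hr
      · left
        have := congrArg (Int.cast (R := ZMod 8)) hr
        simp only [ga'] at this
        push_cast at this
        exact this
      · right
        have := congrArg (Int.cast (R := ZMod 8)) hr
        simp only [ga'] at this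
        push_cast at this
        exact this)
    have h5 : ((8 : ℕ) : ℤ) ∣ 4 * (p + q) := (zd 8 _).2 (by push_cast; exact h4)
    push_cast at h5
    omega

theorem main {a b Y : ℤ} (h : IsCoprime a b) (hY : al a b * ga a b * GG a b = Y ^ 2) : a = b ∨ a = -b := by
  by_cases hodd : 2 ∣ a + b
  · obtain ⟨p, hp⟩ := hodd
    obtain ⟨q, rfl⟩ : ∃ q, b = p + q := ⟨b - p, by ring⟩
    obtain rfl : a = p - q := by omega
    have hpq : ¬ 2 ∣ p + q := fun hh => ncop h Int.prime_two (by omega) hh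
    rw [al_eq, ga_eq, GG_eq] at hY
    obtain ⟨k, hk⟩ := PIDaux.sq_of_sq_mul (c := (8 : ℤ)) (F := al' p q * ga' p q * GG' p q) (g := Y) (by norm_num)
      (by rw [← hY]; ring)
    rcases caseII h hpq hk with h0 | h0
    · left; omega
    · right; omega
  · exact (caseI h hodd hY).elim

end Step1

open Step1

theorem genus4_curve_points (x y : ℚ) :
    y ^ 2 = (x ^ 2 + 1) * (3 * x ^ 2 + 2 * x - 3) *
      (43 * x ^ 6 + 48 * x ^ 5 - 81 * x ^ 4 - 80 * x ^ 3 + 81 * x ^ 2 + 48 * x - 43) ↔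
    (x = 1 ∧ y = 8) ∨ (x = 1 ∧ y = -8) ∨ (x = -1 ∧ y = 8) ∨ (x = -1 ∧ y = -8) := by
  constructor
  · intro h
    have hx : x = 1 ∨ x = -1 := by
      have hb : (x.den : ℚ) ≠ 0 := by exact_mod_cast x.den_ne_zero
      have hxe : (x.num : ℚ) = x * x.den := (Rat.mul_den_eq_num x).symm
      have hcop : IsCoprime x.num (x.den : ℤ) := by
        rw [Int.isCoprime_iff_gcd_eq_one]; exact x.reduced
      have e : (y * x.den ^ 5) ^ 2 = ((al x.num x.den * ga x.num x.den * GG x.num x.den : ℤ) : ℚ) := by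
        simp only [al, ga, GG]
        push_cast
        rw [hxe, mul_pow, h]; ring
      obtain ⟨Y, hY⟩ : ∃ Y : ℤ, (Y : ℚ) = y * x.den ^ 5 := by
        have hYint : IsIntegral ℤ (y * (x.den : ℚ) ^ 5) := by
          refine IsIntegral.of_pow (n := 2) (by norm_num) ?_
          rw [e]
          exact isIntegral_algebraMap (R := ℤ) (A := ℚ)
        exact IsIntegrallyClosed.isIntegral_iff.1 hYint
      have hfin : al x.num x.den * ga x.num x.den * GG x.num x.den = Y ^ 2 := by
        rw [← hY] at e
        exact_mod_cast e.symm
      rcases main hcop hfin with h1 | h1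
      · left
        have : (x.num : ℚ) = x.den := by exact_mod_cast congrArg (Int.cast (R := ℚ)) h1
        rw [hxe] at this
        exact mul_right_cancel₀ hb (by rw [this, one_mul])
      · right
        have : (x.num : ℚ) = -x.den := by exact_mod_cast congrArg (Int.cast (R := ℚ)) h1
        rw [hxe] at this
        exact mul_right_cancel₀ hb (by rw [this]; ring)
    have hy : ∀ {y : ℚ}, y ^ 2 = 64 → y = 8 ∨ y = -8 := by
      intro y hy
      have : (y - 8) * (y + 8) = 0 := by linear_combination hy
      rcases mul_eq_zero.1 this with h | h
      · left; linarith
      · right; linarith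
    rcases hx with rfl | rfl
    · rcases hy (y := y) (by rw [h]; norm_num) with rfl | rfl <;> simp
    · rcases hy (y := y) (by rw [h]; norm_num) with rfl | rfl <;> simp
  · rintro (⟨rfl, rfl⟩ | ⟨rfl, rfl⟩ | ⟨rfl, rfl⟩ | ⟨rfl, rfl⟩) <;> norm_num
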